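/- arXiv:2006.02880 — 3 statements merged into one kernel-verified Lean document; each statement's English description precedes it below -/
import Mathlib

section
/- If Y is a set of infinite cardinality κ and λ is a cardinal with κ ≤ λ ≤ 2^κ, then there exist 2^λ distinct ω-free filters F on Y such that χ(F) = λ; that is, there is a family of pairwise distinct ω-free filters on Y, indexed by a set of cardinality 2^λ, each of character λ. -/
open Cardinal Set

/-- A filter is ω-free iff some countable subfamily has empty intersection. -/
def OmegaFree {Y : Type} (F : Filter Y) : Prop :=
  ∃ A : Set (Set Y), A.Countable ∧ A ⊆ F.sets ∧ ⋂₀ A = ∅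

/-- The character of a filter: the least cardinality of a filter base generating it. -/
noncomputable def filterChar {Y : Type} (F : Filter Y) : Cardinal :=
  sInf { c : Cardinal | ∃ B : Set (Set Y),
    B ⊆ F.sets ∧ (∀ s ∈ F, ∃ b ∈ B, b ⊆ s) ∧ #B = c }

/-!
Hausdorff's independent family of `2 ^ #Z` subsets of an infinite set `Z`, pulled back to `ℕ × Z`,
stays independent modulo the filter `L` generated by the sets `[n, ∞) × Z`, which is ω-free, and
`ℕ × Z` is equipotent with `Z`. Choose `lam` members `A i` of this family. Each of the `2 ^ lam`
sets `f` of indices determines the filter generated by `L`, the `A i` with `i ∈ f` and the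
complements of the `A i` with `i ∉ f`. Independence makes these filters proper, and any two of them
contain disjoint sets. The finite intersections of generators form a base of size `lam`. Conversely,
independence implies that a member of the filter is contained in only finitely many of the sets
`A i`, `(A i)ᶜ`, while a base has an element inside each of the `lam` chosen ones. As `lam` is
infinite, a base therefore has at least `lam` elements.
-/

section Character

variable {Y : Type} {F G : Filter Y}

lemma OmegaFree.mono (hF : OmegaFree F) (h : G ≤ F) : OmegaFree G :=
  let ⟨A, hA, hAF, hAe⟩ := hF
  ⟨A, hA, fun _ hs => h (hAF hs), hAe⟩

lemma omegaFree_comap_atTop (r : Y → ℕ) : OmegaFree (Filter.comap r Filter.atTop) := by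
  refine ⟨range fun n => r ⁻¹' Ici n, countable_range _, ?_, ?_⟩
  · rintro _ ⟨n, rfl⟩
    exact Filter.preimage_mem_comap (Filter.Ici_mem_atTop n)
  · rw [sInter_range]
    exact eq_empty_of_forall_notMem fun y hy => (r y).not_succ_le_self (mem_iInter.1 hy (r y + 1))

lemma filterChar_le_of_hasBasis {ι : Type} {p : ι → Prop} {s : ι → Set Y} (h : F.HasBasis p s) :
    filterChar F ≤ #ι := by
  have hle : filterChar F ≤ #(s '' {i | p i}) :=
    csInf_le' ⟨_, image_subset_iff.2 fun _ => h.mem_of_mem,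
      fun t ht => exists_mem_image.2 (h.mem_iff.1 ht), rfl⟩
  exact hle.trans (mk_image_le.trans (mk_set_le _))

lemma le_filterChar {c : Cardinal}
    (h : ∀ B ⊆ F.sets, (∀ s ∈ F, ∃ b ∈ B, b ⊆ s) → c ≤ #B) : c ≤ filterChar F := by
  refine le_csInf ⟨_, F.sets, Subset.rfl, fun s hs => ⟨s, hs, Subset.rfl⟩, rfl⟩ ?_
  rintro _ ⟨B, hBF, hB, rfl⟩
  exact h B hBF hB

end Character

section PatternFilter

open Filter

variable {Y Z ι κ : Type*} {L : Filter Y} {A : ι → Set Y} {f g : Set ι}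

/-- The filter generated by `L` together with the sets `A i` for `i ∈ f` and the complements
`(A i)ᶜ` for `i ∉ f`. The distinct filters of the theorem are of this form, one for each `f`. -/
def patternFilter (L : Filter Y) (A : ι → Set Y) (f : Set ι) : Filter Y :=
  L ⊓ ⨅ i, 𝓟 {y | y ∈ A i ↔ i ∈ f}

/-- The family `A` is independent modulo the filter `L`: every Boolean combination
`⋂ i ∈ J, ± A i` over a finite set `J` of indices meets every member of `L`. Since such
intersections generate `patternFilter L A f`, this is properness of all the pattern filters.
Taking `L = ⊤` gives the usual independent families. -/
def IndependentModulo (L : Filter Y) (A : ι → Set Y) : Prop :=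
  ∀ f, (patternFilter L A f).NeBot

lemma patternFilter_le : patternFilter L A f ≤ L := inf_le_left

lemma setOf_mem_iff_mem_patternFilter (L : Filter Y) (A : ι → Set Y) (f : Set ι) (i : ι) :
    {y | y ∈ A i ↔ i ∈ f} ∈ patternFilter L A f :=
  mem_inf_of_right (mem_iInf_of_mem i (mem_principal_self _))

lemma hasBasis_patternFilter {p : κ → Prop} {C : κ → Set Y} (hL : L.HasBasis p C) :
    (patternFilter L A f).HasBasis (fun q : κ × Finset ι => p q.1)
      fun q => C q.1 ∩ ⋂ i ∈ q.2, {y | y ∈ A i ↔ i ∈ f} := by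
  have hA : (⨅ i, 𝓟 {y | y ∈ A i ↔ i ∈ f}).HasBasis (fun _ : Finset ι => True)
      fun J => ⋂ i ∈ J, {y | y ∈ A i ↔ i ∈ f} :=
    ⟨fun t => by simp only [mem_iInf_finite, iInf_principal_finset, mem_principal, true_and]⟩
  simpa only [and_true, patternFilter] using hL.inf hA

lemma exists_finset_forall_mem_patternFilter {s : Set Y} (hs : s ∈ patternFilter L A f) :
    ∃ J : Finset ι, ∀ g : Set ι, (∀ i ∈ J, i ∈ g ↔ i ∈ f) → s ∈ patternFilter L A g := by
  obtain ⟨⟨t, J⟩, ht, hts⟩ := (hasBasis_patternFilter L.basis_sets).mem_iff.1 hs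
  refine ⟨J, fun g hg => (hasBasis_patternFilter L.basis_sets).mem_iff.2 ⟨(t, J), ht, ?_⟩⟩
  rintro y ⟨hyt, hyJ⟩
  simp only [mem_iInter, mem_ofPred_eq] at hyJ
  exact hts ⟨hyt, mem_iInter₂.2 fun i hi => (hyJ i hi).trans (hg i hi)⟩

lemma disjoint_patternFilter (hfg : f ≠ g) :
    Disjoint (patternFilter L A f) (patternFilter L A g) := by
  obtain ⟨i, hi⟩ : ∃ i, ¬(i ∈ f ↔ i ∈ g) := by simpa [Set.ext_iff] using hfg
  refine Filter.disjoint_iff.2 ⟨_, setOf_mem_iff_mem_patternFilter L A f i, _,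
    setOf_mem_iff_mem_patternFilter L A g i, Set.disjoint_left.2 fun y hyf hyg => ?_⟩
  exact hi (hyf.symm.trans hyg)

lemma comap_patternFilter (e : Z → Y) (L : Filter Y) (A : ι → Set Y) (f : Set ι) :
    comap e (patternFilter L A f) = patternFilter (comap e L) (fun i => e ⁻¹' A i) f := by
  simp only [patternFilter, comap_inf, comap_iInf, comap_principal]
  rfl

lemma prod_patternFilter (L : Filter Z) (M : Filter Y) (A : ι → Set Y) (f : Set ι) :
    L ×ˢ patternFilter M A f = patternFilter (L ×ˢ M) (fun i => Prod.snd ⁻¹' A i) f := by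
  rw [prod_eq_inf, comap_patternFilter, prod_eq_inf]
  exact (inf_assoc ..).symm

namespace IndependentModulo

lemma injective_patternFilter (hA : IndependentModulo L A) :
    Function.Injective (patternFilter L A) := by
  intro f g hfg
  by_contra hne
  have hdisj : Disjoint (patternFilter L A f) (patternFilter L A g) := disjoint_patternFilter hne
  rw [← hfg, disjoint_self] at hdisj
  exact (hA f).ne hdisj

lemma comap (hA : IndependentModulo L A) {e : Z → Y} (he : Function.Surjective e) :
    IndependentModulo (comap e L) fun i => e ⁻¹' A i := fun f =>
  comap_patternFilter e L A f ▸ (hA f).comap_of_surj he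

lemma prod_snd (hA : IndependentModulo L A) (M : Filter Z) [M.NeBot] :
    IndependentModulo (M ×ˢ L) fun i => Prod.snd ⁻¹' A i := fun f =>
  have := hA f
  prod_patternFilter M L A f ▸ inferInstance

lemma comp_injective (hA : IndependentModulo L A) {φ : κ → ι} (hφ : Function.Injective φ) :
    IndependentModulo L (A ∘ φ) := by
  intro f
  have hle : patternFilter L A (φ '' f) ≤ patternFilter L (A ∘ φ) f := by
    refine inf_le_inf_left L (le_iInf fun k => (iInf_le _ (φ k)).trans ?_)
    simp only [hφ.mem_set_image, Function.comp_apply, le_refl]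
  exact (hA (φ '' f)).mono hle

lemma finite_setOf_subset (hA : IndependentModulo L A) {s : Set Y}
    (hs : s ∈ patternFilter L A f) : {i | s ⊆ {y | y ∈ A i ↔ i ∈ f}}.Finite := by
  obtain ⟨J, hJ⟩ := exists_finset_forall_mem_patternFilter hs
  refine J.finite_toSet.subset fun i hsi => by_contra fun hi => ?_
  -- Flipping `f` at `i ∉ J` gives a pattern whose filter still contains `s`, although it also
  -- contains the complement of `{y | y ∈ A i ↔ i ∈ f}`.
  let g : Set ι := {j | j ∈ f ↔ j ≠ i}
  have hsg : s ∈ patternFilter L A g := hJ g fun j hj => by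
    have hji : j ≠ i := fun h => hi (Finset.mem_coe.2 (h ▸ hj))
    simp [g, hji]
  have := hA g
  obtain ⟨y, hys, hyg⟩ :=
    Filter.nonempty_of_mem (inter_mem hsg (setOf_mem_iff_mem_patternFilter L A g i))
  have hyf : y ∈ A i ↔ i ∈ f := hsi hys
  have hflip : i ∈ g ↔ i ∉ f := by simp [g]
  exact iff_not_self (hyf.symm.trans (hyg.trans hflip))

end IndependentModulo

end PatternFilter

section CharacterOfPatternFilter

variable {Y ι : Type} [Infinite ι] {L : Filter Y} {A : ι → Set Y}

lemma filterChar_patternFilter_le [L.IsCountablyGenerated] (f : Set ι) :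
    filterChar (patternFilter L A f) ≤ #ι := by
  obtain ⟨C, hC⟩ := L.exists_antitone_basis
  calc filterChar (patternFilter L A f) ≤ #(ℕ × Finset ι) :=
        filterChar_le_of_hasBasis (hasBasis_patternFilter hC.toHasBasis)
    _ = #ι := by simp [aleph0_mul_eq (aleph0_le_mk ι)]

lemma IndependentModulo.mk_le_filterChar (hA : IndependentModulo L A) (f : Set ι) :
    #ι ≤ filterChar (patternFilter L A f) := by
  refine le_filterChar fun B hBF hB => ?_
  let J : B → Finset ι := fun b => (hA.finite_setOf_subset (hBF b.2)).toFinset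
  have hcover : ⋃ b, (J b : Set ι) = Set.univ := by
    refine eq_univ_of_forall fun i => ?_
    obtain ⟨b, hb, hbi⟩ := hB _ (setOf_mem_iff_mem_patternFilter L A f i)
    exact mem_iUnion.2 ⟨⟨b, hb⟩, (Finite.mem_toFinset _).2 hbi⟩
  exact (le_range_of_union_finset_eq_univ J hcover).trans mk_range_le

end CharacterOfPatternFilter

section Hausdorff

open scoped Classical in
/-- Hausdorff's independent family on the set of pairs `(s, 𝒯)` of a finite set `s` of points of
`X` and a finite set `𝒯` of finite sets: `hausdorffSet U` consists of the pairs for which the trace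
of `U` on `s` belongs to `𝒯`. -/
def hausdorffSet {X : Type*} (U : Set X) : Set (Finset X × Finset (Finset X)) :=
  {p | p.1.filter (· ∈ U) ∈ p.2}

open scoped Classical in
lemma exists_finset_injOn_filter_mem {X : Type*} (J : Finset (Set X)) :
    ∃ s : Finset X, InjOn (fun U : Set X => s.filter (· ∈ U)) J := by
  have hsep : ∀ p : J.offDiag, ∃ x, ¬(x ∈ p.1.1 ↔ x ∈ p.1.2) := fun p => by
    simpa [Set.ext_iff] using (Finset.mem_offDiag.1 p.2).2.2
  choose w hw using hsep
  refine ⟨Finset.univ.image w, fun U hU V hV hUV => by_contra fun hne => ?_⟩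
  let p : J.offDiag := ⟨(U, V), Finset.mem_offDiag.2 ⟨hU, hV, hne⟩⟩
  have hwp : w p ∈ Finset.univ.image w := Finset.mem_image_of_mem w (Finset.mem_univ p)
  exact hw p (by simpa only [Finset.mem_filter, hwp, true_and] using Finset.ext_iff.1 hUV (w p))

lemma independentModulo_top_hausdorffSet (X : Type*) :
    IndependentModulo ⊤ (hausdorffSet (X := X)) := by
  classical
  refine fun f => (hasBasis_patternFilter Filter.hasBasis_top).neBot_iff.2 fun {q} _ => ?_
  obtain ⟨s, hs⟩ := exists_finset_injOn_filter_mem q.2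
  let trace : Set X → Finset X := fun U => s.filter (· ∈ U)
  refine ⟨(s, (q.2.filter (· ∈ f)).image trace), mem_univ _, mem_iInter₂.2 fun U hU => ?_⟩
  change trace U ∈ (q.2.filter (· ∈ f)).image trace ↔ U ∈ f
  have hsub : (↑(q.2.filter (· ∈ f)) : Set (Set X)) ⊆ q.2 := Finset.filter_subset _ _
  rw [← Finset.mem_coe, Finset.coe_image, hs.mem_image_iff hsub hU, Finset.mem_coe,
    Finset.mem_filter, and_iff_right hU]

lemma exists_omegaFree_independentModulo (Y : Type) [Infinite Y] :
    ∃ (L : Filter Y) (A : Set Y → Set Y),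
      L.IsCountablyGenerated ∧ OmegaFree L ∧ IndependentModulo L A := by
  have hcard : #Y = #(ℕ × Finset Y × Finset (Finset Y)) := by
    have hY := aleph0_le_mk Y
    simp [mk_prod, mul_eq_self hY, aleph0_mul_eq hY]
  obtain ⟨e⟩ := Cardinal.eq.1 hcard
  refine ⟨Filter.comap e (Filter.atTop ×ˢ ⊤), _, ?_, ?_,
    ((independentModulo_top_hausdorffSet Y).prod_snd Filter.atTop).comap e.surjective⟩
  · infer_instance
  · rw [Filter.prod_top, Filter.comap_comap]
    exact omegaFree_comap_atTop _

end Hausdorff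

theorem stmt7_general (Y : Type) (lam : Cardinal) (h1 : ℵ₀ ≤ lam) (h2 : lam ≤ 2 ^ #Y) :
    ∃ G : Set (Filter Y), #G = 2 ^ lam ∧
      ∀ F ∈ G, F.NeBot ∧ OmegaFree F ∧ filterChar F = lam := by
  rw [← mk_set] at h2
  have : Infinite Y :=
    not_finite_iff_infinite.1 fun _ => (h1.trans h2).not_gt (lt_aleph0_of_finite (Set Y))
  obtain ⟨L, A, hLc, hLω, hA⟩ := exists_omegaFree_independentModulo Y
  obtain ⟨I, rfl⟩ := le_mk_iff_exists_set.1 h2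
  have : Infinite I := infinite_iff.2 h1
  let A' : I → Set Y := A ∘ Subtype.val
  have hA' : IndependentModulo L A' := hA.comp_injective Subtype.val_injective
  refine ⟨range (patternFilter L A'), ?_, ?_⟩
  · rw [mk_range_eq _ hA'.injective_patternFilter, mk_set]
  · rintro _ ⟨f, rfl⟩
    exact ⟨hA' f, hLω.mono patternFilter_le,
      (filterChar_patternFilter_le f).antisymm (hA'.mk_le_filterChar f)⟩

/-- If `Y` is a set of infinite cardinality `κ` and `κ ≤ λ ≤ 2 ^ κ`, then there exist
`2 ^ λ` distinct ω-free (proper) filters on `Y` of character `λ`. -/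
theorem stmt7 (Y : Type) (κ lam : Cardinal) (hκ : ℵ₀ ≤ κ) (hY : #Y = κ)
    (h1 : κ ≤ lam) (h2 : lam ≤ 2 ^ κ) :
    ∃ G : Set (Filter Y), #G = 2 ^ lam ∧
      ∀ F ∈ G, F.NeBot ∧ OmegaFree F ∧ filterChar F = lam := by
  subst hY
  exact stmt7_general Y lam (hκ.trans h1) h2
end

section
/- On an infinite set Y of cardinality κ there exist precisely 2^(2^κ) ω-free ultrafilters F with χ(F) = 2^κ; that is, the set of ultrafilters on Y that are ω-free and have character 2^κ has cardinality exactly 2^(2^κ). -/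
open Cardinal Set

/-!
Call a family of sets independent modulo a filter `F` if every finite intersection of members and
complements of other members meets every set of `F`. The Fichtenholz–Kantorovich family, spread over
a product with `ℕ`, is a family `A` of `2 ^ κ` subsets of `Y` independent modulo an ω-free filter
`F`. A choice `S` of signs replaces some of the sets `A i` by their complements. By independence
(Pospíšil), some ultrafilter `u S ≤ F` contains all the signed sets but no set that lies below
infinitely many of them. A base of `u S` must hence have `2 ^ κ` elements, and distinct choices of
signs put complementary sets into the ultrafilters, so `S ↦ u S` is injective.
-/

open Filter

section Independence

variable {Y Z ι : Type*} {F : Filter Y} {A : ι → Set Y}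

/-- The family obtained from `A` by replacing `A i` with its complement for every `i ∉ S`. -/
def signedFamily (A : ι → Set Y) (S : Set ι) (i : ι) : Set Y :=
  {y | y ∈ A i ↔ i ∈ S}

/-- A family of sets is independent modulo a filter `F` if, for every choice of signs, each finite
intersection of signed members meets every set of `F`. Independent families in the usual sense
correspond to `F = ⊤`. -/
def IndependentMod (F : Filter Y) (A : ι → Set Y) : Prop :=
  ∀ (P : Finset ι) (S : Set ι), ∃ᶠ y in F, ∀ i ∈ P, y ∈ signedFamily A S i

theorem signedFamily_signedFamily (A : ι → Set Y) (S T : Set ι) :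
    signedFamily (signedFamily A S) T = signedFamily A {i | i ∈ S ↔ i ∈ T} := by
  ext i y
  simp only [signedFamily, mem_ofPred_eq]
  tauto

theorem eq_of_forall_signedFamily_mem [F.NeBot] {S T : Set ι} (hS : ∀ i, signedFamily A S i ∈ F)
    (hT : ∀ i, signedFamily A T i ∈ F) : S = T := by
  ext i
  obtain ⟨y, hyS, hyT⟩ := Filter.nonempty_of_mem (inter_mem (hS i) (hT i))
  exact hyS.symm.trans hyT

theorem independentMod_map_iff {f : Y → Z} {B : ι → Set Z} :
    IndependentMod (map f F) B ↔ IndependentMod F fun i => f ⁻¹' B i :=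
  Iff.rfl

theorem IndependentMod.signedFamily (hA : IndependentMod F A) (S : Set ι) :
    IndependentMod F (signedFamily A S) := by
  intro P T
  rw [signedFamily_signedFamily]
  exact hA P _

theorem IndependentMod.frequently_mem_and_notMem (hA : IndependentMod F A) {κ : Type*}
    {X : κ → Set Y} (hX : ∀ k, {i | X k ⊆ A i}.Infinite) {P : Set ι} (hP : P.Finite)
    {Q : Set κ} (hQ : Q.Finite) : ∃ᶠ y in F, (∀ i ∈ P, y ∈ A i) ∧ ∀ k ∈ Q, y ∉ X k := by
  classical
  choose j hXj hjP using fun k => (hX k).exists_notMem_finite hP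
  refine (hA (hP.toFinset ∪ hQ.toFinset.image j) P).mono fun y hy =>
    ⟨fun i hi => (hy i (by simp [hi])).2 hi, fun k hk hyX => ?_⟩
  have hyj : y ∈ A (j k) ↔ j k ∈ P :=
    hy (j k) (Finset.mem_union_right _ (Finset.mem_image_of_mem j (hQ.mem_toFinset.2 hk)))
  exact hjP k (hyj.1 (hXj k hyX))

theorem IndependentMod.exists_ultrafilter (hA : IndependentMod F A) :
    ∃ u : Ultrafilter Y, ↑u ≤ F ∧ (∀ i, A i ∈ u) ∧ ∀ X ∈ u, {i | X ⊆ A i}.Finite := by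
  let K : Filter Y := ⨅ i, 𝓟 (A i)
  let L : Filter Y := ⨅ X : {X : Set Y | {i | X ⊆ A i}.Infinite}, 𝓟 (X : Set Y)ᶜ
  have : NeBot (F ⊓ (K ⊓ L)) := by
    have hKL := (hasBasis_iInf_principal_finite A).inf (hasBasis_iInf_principal_finite
      fun X : {X : Set Y | {i | X ⊆ A i}.Infinite} => (X : Set Y)ᶜ)
    refine inf_neBot_iff_frequently_right.2 fun hp => ?_
    obtain ⟨⟨P, Q⟩, ⟨hP, hQ⟩, hPQ⟩ := hKL.eventually_iff.1 hp
    refine (hA.frequently_mem_and_notMem (fun X => X.2) hP hQ).mono fun y hy => hPQ ?_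
    exact ⟨mem_iInter₂.2 hy.1, mem_iInter₂.2 hy.2⟩
  obtain ⟨u, hu⟩ := Ultrafilter.exists_le (F ⊓ (K ⊓ L))
  obtain ⟨huF, huK, huL⟩ : ↑u ≤ F ∧ ↑u ≤ K ∧ ↑u ≤ L := by simpa only [le_inf_iff] using hu
  refine ⟨u, huF, fun i => huK (mem_iInf_of_mem i (mem_principal_self _)), fun X hX => ?_⟩
  by_contra hinf
  have hXc : Xᶜ ∈ L := mem_iInf_of_mem ⟨X, hinf⟩ (mem_principal_self _)
  exact Ultrafilter.compl_notMem_iff.2 hX (huL hXc)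

end Independence

section FichtenholzKantorovich

variable {α : Type*}

open Classical in
/-- The Fichtenholz–Kantorovich family, indexed by the subsets `X` of `α`: the pairs of a finite set
`D ⊆ α` and a finite collection of finite sets containing the trace `D ∩ X`. -/
def finsetTraceFamily (X : Set α) : Set (Finset α × Finset (Finset α)) :=
  {p | p.1.filter (· ∈ X) ∈ p.2}

open Classical in
theorem exists_finset_injOn_filter_mem_s8 (P : Finset (Set α)) :
    ∃ D : Finset α, InjOn (fun X : Set α => D.filter (· ∈ X)) P := by
  have hsep (X X' : Set α) :
      ∀ᶠ D : Finset α in atTop, D.filter (· ∈ X) = D.filter (· ∈ X') → X = X' := by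
    by_cases hXX' : X = X'
    · exact Eventually.of_forall fun _ _ => hXX'
    obtain ⟨d, hd⟩ : ∃ d, ¬(d ∈ X ↔ d ∈ X') := by simpa [Set.ext_iff] using hXX'
    filter_upwards [eventually_ge_atTop {d}] with D hdD hD
    have hdD : d ∈ D := Finset.singleton_subset_iff.1 hdD
    exact absurd (by simpa [hdD] using Finset.ext_iff.1 hD d) hd
  exact (P.eventually_all.2 fun X _ => P.eventually_all.2 fun X' _ => hsep X X').exists.imp
    fun D hD X hX X' hX' => hD X hX X' hX'

theorem independentMod_finsetTraceFamily :
    IndependentMod ⊤ (finsetTraceFamily : Set α → Set (Finset α × Finset (Finset α))) := by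
  classical
  intro P S
  obtain ⟨D, hD⟩ := exists_finset_injOn_filter_mem_s8 P
  rw [frequently_top]
  refine ⟨(D, (P.filter (· ∈ S)).image fun X => D.filter (· ∈ X)), fun X hX => ?_⟩
  change D.filter (· ∈ X) ∈ (P.filter (· ∈ S)).image (fun X => D.filter (· ∈ X)) ↔ X ∈ S
  rw [Finset.mem_image]
  constructor
  · rintro ⟨X', hX', hXX'⟩
    rw [Finset.mem_filter] at hX'
    exact hD hX'.1 hX hXX' ▸ hX'.2
  · exact fun hXS => ⟨X, Finset.mem_filter.2 ⟨hX, hXS⟩, rfl⟩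

end FichtenholzKantorovich

section OmegaFree

theorem OmegaFree.of_tendsto {Y Z : Type} {F : Filter Y} {G : Filter Z} {f : Y → Z}
    (hG : OmegaFree G) (hf : Tendsto f F G) : OmegaFree F := by
  obtain ⟨𝒜, h𝒜, h𝒜G, h𝒜0⟩ := hG
  refine ⟨preimage f '' 𝒜, h𝒜.image _, ?_, ?_⟩
  · rintro _ ⟨s, hs, rfl⟩
    exact hf (h𝒜G hs)
  · rw [sInter_image, ← preimage_iInter₂, ← sInter_eq_biInter, h𝒜0, preimage_empty]

theorem omegaFree_cofinite (α : Type) [Countable α] : OmegaFree (cofinite : Filter α) := by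
  refine ⟨range fun a => {a}ᶜ, countable_range _, ?_, ?_⟩
  · rintro _ ⟨a, rfl⟩
    exact (finite_singleton a).compl_mem_cofinite
  · rw [sInter_range, ← compl_iUnion, iUnion_of_singleton, compl_univ]

theorem mk_finset_prod_finset_finset_prod_nat (Y : Type*) [Infinite Y] :
    #((Finset Y × Finset (Finset Y)) × ℕ) = #Y := by
  have hY : ℵ₀ ≤ #Y := aleph0_le_mk Y
  simp [mk_finset_of_infinite, mul_eq_left hY hY aleph0_ne_zero, mul_eq_self hY]

theorem exists_omegaFree_independentMod (Y : Type) [Infinite Y] :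
    ∃ (F : Filter Y) (A : Set Y → Set Y), OmegaFree F ∧ IndependentMod F A := by
  obtain ⟨e⟩ := Cardinal.eq.1 (mk_finset_prod_finset_finset_prod_nat Y).symm
  let F : Filter Y := comap e (⊤ ×ˢ cofinite)
  have hF : map e F = ⊤ ×ˢ cofinite := map_comap_of_surjective e.surjective _
  have hfst : map (Prod.fst ∘ e) F = ⊤ := by rw [← map_map, hF, map_fst_prod]
  refine ⟨F, fun X => (Prod.fst ∘ e) ⁻¹' finsetTraceFamily X,
    (omegaFree_cofinite ℕ).of_tendsto (tendsto_snd.comp tendsto_comap), ?_⟩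
  rw [← independentMod_map_iff, hfst]
  exact independentMod_finsetTraceFamily

end OmegaFree

section Cardinality

variable {Y : Type} {F : Filter Y}

theorem filterChar_le (F : Filter Y) : filterChar F ≤ 2 ^ #Y :=
  calc
    filterChar F ≤ #F.sets :=
      csInf_le' ⟨F.sets, subset_rfl, fun s hs => ⟨s, hs, subset_rfl⟩, rfl⟩
    _ ≤ #(Set Y) := mk_set_le _
    _ = 2 ^ #Y := mk_set

theorem mk_le_filterChar {ι : Type} [Infinite ι] {C : ι → Set Y} (hC : ∀ i, C i ∈ F)
    (hfin : ∀ X ∈ F, {i | X ⊆ C i}.Finite) : #ι ≤ filterChar F := by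
  refine le_csInf ⟨_, F.sets, subset_rfl, fun s hs => ⟨s, hs, subset_rfl⟩, rfl⟩ ?_
  rintro _ ⟨B, hBF, hB, rfl⟩
  choose b hbB hbC using fun i => hB (C i) (hC i)
  by_contra! hlt
  obtain ⟨X, hX⟩ := exists_infinite_fiber (fun i => (⟨b i, hbB i⟩ : B)) hlt
  refine (infinite_coe_iff.1 hX) ((hfin X (hBF X.2)).subset ?_)
  rintro i rfl
  exact hbC i

theorem mk_ultrafilter_le (α : Type*) : #(Ultrafilter α) ≤ 2 ^ (2 : Cardinal) ^ #α := by
  rw [← mk_set, ← mk_set]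
  exact mk_le_of_injective (f := fun u : Ultrafilter α => (u : Filter α).sets)
    fun _ _ h => Ultrafilter.coe_injective (filter_eq h)

end Cardinality

/-- On an infinite set `Y` of cardinality `κ` there exist precisely `2 ^ (2 ^ κ)`
ω-free ultrafilters of character `2 ^ κ`. -/
theorem stmt8 (Y : Type) (κ : Cardinal) (hκ : ℵ₀ ≤ κ) (hY : #Y = κ) :
    #{u : Ultrafilter Y | OmegaFree (u : Filter Y) ∧ filterChar (u : Filter Y) = (2 : Cardinal) ^ κ}
      = (2 : Cardinal) ^ ((2 : Cardinal) ^ κ) := by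
  subst hY
  have : Infinite Y := infinite_iff.2 hκ
  obtain ⟨F, A, hF, hA⟩ := exists_omegaFree_independentMod Y
  choose u huF huA hfin using fun S => (hA.signedFamily S).exists_ultrafilter
  have hfree (S) : OmegaFree (u S : Filter Y) := hF.of_tendsto (tendsto_id'.2 (huF S))
  have hchar (S) : filterChar (u S : Filter Y) = 2 ^ #Y :=
    (filterChar_le _).antisymm (mk_set.symm.trans_le (mk_le_filterChar (huA S) (hfin S)))
  have hinj : Function.Injective u := fun S T hST =>
    eq_of_forall_signedFamily_mem (huA S) (hST ▸ huA T)
  refine ((mk_set_le _).trans (mk_ultrafilter_le Y)).antisymm ?_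
  calc
    (2 : Cardinal) ^ (2 : Cardinal) ^ #Y = #(Set (Set Y)) := by rw [mk_set, mk_set]
    _ ≤ _ := mk_le_of_injective (f := fun S => ⟨u S, hfree S, hchar S⟩)
      fun S T hST => hinj (congrArg Subtype.val hST)
end

section
/- Let κ and λ be infinite cardinals with κ ≤ λ ≤ 2^κ. Then there exist 2^λ mutually non-homeomorphic scattered, strongly zero-dimensional, hereditarily paracompact, perfectly normal topological spaces X with |X| = κ and w(X) = λ. Moreover, if λ ≤ 2^μ < 2^λ for some infinite cardinal μ, such a family can be chosen with all members additionally almost discrete; and if λ = 2^μ for some infinite cardinal μ (in particular if λ = 2^κ), such a family can be chosen with all members additionally almost discrete and extremally disconnected. -/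
open Cardinal Set Topology

/-- The weight of a topological space: the least cardinality of a basis for its topology. -/
noncomputable def tweight (X : Type) [TopologicalSpace X] : Cardinal :=
  sInf { c : Cardinal | ∃ B : Set (Set X), TopologicalSpace.IsTopologicalBasis B ∧ #B = c }

/-- A space is scattered if every nonempty subset has a point isolated in that subset. -/
def Scattered (X : Type) [TopologicalSpace X] : Prop :=
  ∀ S : Set X, S.Nonempty → ∃ x ∈ S, ∃ U : Set X, IsOpen U ∧ U ∩ S = {x}

/-- Strong zero-dimensionality: every closed set contained in an open set can be
separated from its complement by an open-closed set. -/
def StronglyZeroDimensional (X : Type) [TopologicalSpace X] : Prop :=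
  ∀ A U : Set X, IsClosed A → IsOpen U → A ⊆ U →
    ∃ V : Set X, IsOpen V ∧ IsClosed V ∧ A ⊆ V ∧ V ⊆ U

/-- A space is hereditarily paracompact if every subspace is paracompact. -/
def HereditarilyParacompact (X : Type) [TopologicalSpace X] : Prop :=
  ∀ S : Set X, ParacompactSpace S

/-- A space is perfectly normal iff it is normal and every closed set is a Gδ-set. -/
def PerfectlyNormal (X : Type) [TopologicalSpace X] : Prop :=
  NormalSpace X ∧ ∀ C : Set X, IsClosed C → IsGδ C

/-- A Hausdorff space is almost discrete iff the complement of some point is discrete. -/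
def AlmostDiscrete (X : Type) [TopologicalSpace X] : Prop :=
  T2Space X ∧ ∃ x : X, DiscreteTopology ({x}ᶜ : Set X)

/-- A space is almost metrizable iff it is perfectly normal and the complement of some
point is metrizable. -/
def AlmostMetrizable (X : Type) [TopologicalSpace X] : Prop :=
  PerfectlyNormal X ∧ ∃ x : X, TopologicalSpace.MetrizableSpace ({x}ᶜ : Set X)

/-- There is a family of `n` pairwise non-homeomorphic spaces, all with property `P`. -/
def ExistsNonHomeoFamily (n : Cardinal) (P : (X : Type) → TopologicalSpace X → Prop) : Prop :=
  ∃ (ι : Type) (F : ι → Type) (t : (i : ι) → TopologicalSpace (F i)),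
    #ι = n ∧ (∀ i, P (F i) (t i)) ∧
      ∀ i j, i ≠ j → IsEmpty (@Homeomorph (F i) (F j) (t i) (t j))

/-- Every family of pairwise non-homeomorphic spaces with property `P` has at most `n`
members. -/
def NonHomeoUpperBound (n : Cardinal) (P : (X : Type) → TopologicalSpace X → Prop) : Prop :=
  ∀ (ι : Type) (F : ι → Type) (t : (i : ι) → TopologicalSpace (F i)),
    (∀ i, P (F i) (t i)) →
    (∀ i j, i ≠ j → IsEmpty (@Homeomorph (F i) (F j) (t i) (t j))) → #ι ≤ n

/-- There are precisely `n` spaces with property `P`, up to homeomorphism. -/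
def PreciselyNonHomeo (n : Cardinal) (P : (X : Type) → TopologicalSpace X → Prop) : Prop :=
  ExistsNonHomeoFamily n P ∧ NonHomeoUpperBound n P

/-
The almost discrete spaces add one point to a discrete space, with a filter as its punctured
neighbourhoods; the weight is then the character of the filter. Independent families provide many
filters (or ultrafilters) of prescribed character, and since the filters on an infinite set `M` fall
into classes of size at most `2 ^ #M` under self-maps of `M`, enough of the resulting spaces are not
homeomorphic as soon as there are more than `2 ^ #M` filters. When `2 ^ κ = 2 ^ λ` this count fails.
Instead, `κ`-branching trees topologised by the levels of their edges realise every subset `S` of a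
well-order of size `κ`: the points of rank `b` converge, near the points whose rank succeeds `b`,
exactly when `b ∉ S`. An almost discrete summand of weight `λ` then corrects the weight.
-/

open Filter

universe u

/-- A space is hereditarily ultraparacompact if every family of open sets has a refinement by
pairwise disjoint open sets with the same union. Since the family need not cover the space, the
property passes to subspaces. -/
def HereditarilyUltraparacompact (X : Type*) [TopologicalSpace X] : Prop :=
  ∀ 𝒰 : Set (Set X), (∀ U ∈ 𝒰, IsOpen U) → ∃ 𝒱 : Set (Set X),
    (∀ V ∈ 𝒱, IsOpen V) ∧ 𝒱.PairwiseDisjoint id ∧ ⋃₀ 𝒱 = ⋃₀ 𝒰 ∧ ∀ V ∈ 𝒱, ∃ U ∈ 𝒰, V ⊆ U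

namespace HereditarilyUltraparacompact

theorem of_isInducing {X Y : Type*} [TopologicalSpace X] [TopologicalSpace Y] {f : X → Y}
    (hf : IsInducing f) (hY : HereditarilyUltraparacompact Y) :
    HereditarilyUltraparacompact X := by
  intro 𝒰 h𝒰
  obtain ⟨𝒱, hopen, hdisj, hunion, hrefine⟩ := hY {U | IsOpen U ∧ f ⁻¹' U ∈ 𝒰} fun U hU => hU.1
  refine ⟨preimage f '' 𝒱, ?_, ?_, ?_, ?_⟩
  · rintro _ ⟨V, hV, rfl⟩
    exact (hopen V hV).preimage hf.continuous
  · rintro _ ⟨V, hV, rfl⟩ _ ⟨W, hW, rfl⟩ hne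
    exact (hdisj hV hW fun h => hne (congrArg _ h)).preimage f
  · have hmem (x : X) : f x ∈ ⋃₀ {U | IsOpen U ∧ f ⁻¹' U ∈ 𝒰} ↔ x ∈ ⋃₀ 𝒰 := by
      constructor
      · rintro ⟨U, hU, hx⟩
        exact ⟨f ⁻¹' U, hU.2, hx⟩
      · rintro ⟨U, hU, hx⟩
        obtain ⟨U, hUo, rfl⟩ := hf.isOpen_iff.1 (h𝒰 U hU)
        exact ⟨U, ⟨hUo, hU⟩, hx⟩
    ext x
    rw [← hmem, ← hunion]
    simp only [sUnion_image, mem_iUnion, mem_preimage, mem_sUnion, exists_prop]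
  · rintro _ ⟨V, hV, rfl⟩
    obtain ⟨U, hU, hVU⟩ := hrefine V hV
    exact ⟨f ⁻¹' U, hU.2, preimage_mono hVU⟩

theorem paracompactSpace {X : Type*} [TopologicalSpace X] (hX : HereditarilyUltraparacompact X) :
    ParacompactSpace X where
  locallyFinite_refinement α s hs hcover := by
    obtain ⟨𝒱, hopen, hdisj, hunion, hrefine⟩ := hX (range s) (by rintro _ ⟨a, rfl⟩; exact hs a)
    rw [sUnion_range, hcover] at hunion
    refine ⟨𝒱, Subtype.val, fun V => hopen V V.2, sUnion_eq_iUnion.symm.trans hunion, ?_, ?_⟩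
    · intro x
      obtain ⟨V, hV, hx⟩ : x ∈ ⋃₀ 𝒱 := hunion ▸ mem_univ x
      refine ⟨V, (hopen V hV).mem_nhds hx, (finite_singleton ⟨V, hV⟩).subset fun W hW => ?_⟩
      exact Subtype.ext (hdisj.elim W.2 hV (not_disjoint_iff_nonempty_inter.2 hW))
    · intro V
      obtain ⟨_, ⟨a, rfl⟩, ha⟩ := hrefine V V.2
      exact ⟨a, ha⟩

theorem hereditarilyParacompact {X : Type} [TopologicalSpace X]
    (hX : HereditarilyUltraparacompact X) : HereditarilyParacompact X := fun _ =>
  (hX.of_isInducing IsInducing.subtypeVal).paracompactSpace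

-- The separating set is the union of the members of a disjoint refinement of `{U, Aᶜ}` meeting `A`.
theorem stronglyZeroDimensional {X : Type} [TopologicalSpace X]
    (hX : HereditarilyUltraparacompact X) : StronglyZeroDimensional X := by
  intro A U hA hU hAU
  obtain ⟨𝒱, hopen, hdisj, hunion, hrefine⟩ := hX {U, Aᶜ} (by simp [hU, hA.isOpen_compl])
  have hcover (x : X) : x ∈ ⋃₀ 𝒱 := by
    rw [hunion, sUnion_pair]
    exact (em (x ∈ A)).imp (@hAU x) id
  refine ⟨⋃₀ {V ∈ 𝒱 | (V ∩ A).Nonempty}, isOpen_sUnion fun V hV => hopen V hV.1, ?_, ?_, ?_⟩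
  · have hcompl : (⋃₀ {V ∈ 𝒱 | (V ∩ A).Nonempty})ᶜ = ⋃₀ {V ∈ 𝒱 | ¬ (V ∩ A).Nonempty} := by
      ext x
      obtain ⟨V, hV, hx⟩ := hcover x
      have huniq {W} (hW : W ∈ 𝒱) (hxW : x ∈ W) : W = V :=
        hdisj.elim hW hV (not_disjoint_iff.2 ⟨x, hxW, hx⟩)
      constructor
      · exact fun h => ⟨V, ⟨hV, fun hVA => h ⟨V, ⟨hV, hVA⟩, hx⟩⟩, hx⟩
      · rintro ⟨W, hW, hxW⟩ ⟨W', hW', hxW'⟩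
        exact hW.2 (huniq hW.1 hxW ▸ huniq hW'.1 hxW' ▸ hW'.2)
    rw [← isOpen_compl_iff, hcompl]
    exact isOpen_sUnion fun V hV => hopen V hV.1
  · intro x hx
    obtain ⟨V, hV, hxV⟩ := hcover x
    exact ⟨V, ⟨hV, x, hxV, hx⟩, hxV⟩
  · rintro x ⟨V, ⟨hV, y, hyV, hyA⟩, hx⟩
    obtain ⟨W, rfl | rfl, hVW⟩ := hrefine V hV
    exacts [hVW hx, absurd hyA (hVW hyV)]

theorem normalSpace {X : Type} [TopologicalSpace X] (hX : HereditarilyUltraparacompact X) :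
    NormalSpace X where
  normal A B hA hB hAB := by
    obtain ⟨V, hVo, hVc, hAV, hVB⟩ :=
      hX.stronglyZeroDimensional A Bᶜ hA hB.isOpen_compl hAB.subset_compl_right
    exact ⟨V, Vᶜ, hVo, hVc.isOpen_compl, hAV, subset_compl_comm.1 hVB, disjoint_compl_right⟩

theorem sum {X Y : Type*} [TopologicalSpace X] [TopologicalSpace Y]
    (hX : HereditarilyUltraparacompact X) (hY : HereditarilyUltraparacompact Y) :
    HereditarilyUltraparacompact (X ⊕ Y) := by
  intro 𝒰 h𝒰
  obtain ⟨𝒱, hVo, hVd, hVu, hVr⟩ := hX (preimage Sum.inl '' 𝒰)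
    (forall_mem_image.2 fun U hU => (h𝒰 U hU).preimage continuous_inl)
  obtain ⟨𝒲, hWo, hWd, hWu, hWr⟩ := hY (preimage Sum.inr '' 𝒰)
    (forall_mem_image.2 fun U hU => (h𝒰 U hU).preimage continuous_inr)
  refine ⟨image Sum.inl '' 𝒱 ∪ image Sum.inr '' 𝒲, ?_, ?_, ?_, ?_⟩
  · rintro _ (⟨V, hV, rfl⟩ | ⟨W, hW, rfl⟩)
    exacts [isOpenMap_inl _ (hVo V hV), isOpenMap_inr _ (hWo W hW)]
  · rintro _ (⟨V, hV, rfl⟩ | ⟨W, hW, rfl⟩) _ (⟨V', hV', rfl⟩ | ⟨W', hW', rfl⟩) hne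
    · exact disjoint_image_of_injective Sum.inl_injective (hVd hV hV' fun h => hne (congrArg _ h))
    · exact disjoint_image_inl_image_inr
    · exact disjoint_image_inl_image_inr.symm
    · exact disjoint_image_of_injective Sum.inr_injective (hWd hW hW' fun h => hne (congrArg _ h))
  · rw [sUnion_union, ← image_sUnion, ← image_sUnion, hVu, hWu, sUnion_image, sUnion_image,
      ← preimage_sUnion, ← preimage_sUnion, image_preimage_inl_union_image_preimage_inr]
  · rintro _ (⟨V, hV, rfl⟩ | ⟨W, hW, rfl⟩)
    · obtain ⟨_, ⟨U, hU, rfl⟩, hVU⟩ := hVr V hV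
      exact ⟨U, hU, image_subset_iff.2 hVU⟩
    · obtain ⟨_, ⟨U, hU, rfl⟩, hWU⟩ := hWr W hW
      exact ⟨U, hU, image_subset_iff.2 hWU⟩

end HereditarilyUltraparacompact

theorem isGδ_image_of_isOpenEmbedding {X Y : Type*} [TopologicalSpace X] [TopologicalSpace Y]
    {f : X → Y} (hf : IsOpenEmbedding f) {s : Set X} (hs : IsGδ s) : IsGδ (f '' s) := by
  obtain ⟨U, hU, rfl⟩ := isGδ_iff_eq_iInter_nat.1 hs
  rw [hf.injective.injOn.image_iInter_eq]
  exact .iInter fun n => (hf.isOpenMap _ (hU n)).isGδ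

theorem isGδ_of_isClosed_sum {X Y : Type*} [TopologicalSpace X] [TopologicalSpace Y]
    (hX : ∀ C : Set X, IsClosed C → IsGδ C) (hY : ∀ C : Set Y, IsClosed C → IsGδ C)
    (C : Set (X ⊕ Y)) (hC : IsClosed C) : IsGδ C := by
  rw [← image_preimage_inl_union_image_preimage_inr C]
  exact (isGδ_image_of_isOpenEmbedding .inl (hX _ (hC.preimage continuous_inl))).union
    (isGδ_image_of_isOpenEmbedding .inr (hY _ (hC.preimage continuous_inr)))

section FiberBasis

variable {X D : Type*} [TopologicalSpace X] {π : ℕ → X → D}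

theorem isOpen_preimage_of_hasAntitoneBasis_fibers
    (h : ∀ x, (𝓝 x).HasAntitoneBasis fun n => {y | π n y = π n x}) (n : ℕ) (s : Set D) :
    IsOpen (π n ⁻¹' s) :=
  isOpen_iff_mem_nhds.2 fun x hx =>
    mem_of_superset ((h x).mem n) fun y (hy : π n y = π n x) => by rwa [mem_preimage, hy]

theorem isGδ_of_isClosed_of_hasAntitoneBasis_fibers
    (h : ∀ x, (𝓝 x).HasAntitoneBasis fun n => {y | π n y = π n x}) (C : Set X)
    (hC : IsClosed C) : IsGδ C := by
  have hC_eq : C = ⋂ n, π n ⁻¹' (π n '' C) := by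
    refine (subset_iInter fun n => subset_preimage_image _ _).antisymm fun x hx => ?_
    rw [← hC.closure_eq, mem_closure_iff_nhds_basis (h x).1]
    intro n _
    obtain ⟨y, hy, hyx⟩ := mem_iInter.1 hx n
    exact ⟨y, hy, hyx⟩
  rw [hC_eq]
  exact .iInter fun n => (isOpen_preimage_of_hasAntitoneBasis_fibers h n _).isGδ

-- The refinement consists of the largest fibers contained in a member of the family.
theorem hereditarilyUltraparacompact_of_hasAntitoneBasis_fibers
    (h : ∀ x, (𝓝 x).HasAntitoneBasis fun n => {y | π n y = π n x}) :
    HereditarilyUltraparacompact X := by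
  intro 𝒰 h𝒰
  have hfiber {m n : ℕ} (hmn : m ≤ n) {x y : X} (hxy : π n y = π n x) : π m y = π m x :=
    (h x).2 hmn hxy
  let level (x : X) : Set ℕ := {n | ∃ U ∈ 𝒰, {y | π n y = π n x} ⊆ U}
  refine ⟨{V | ∃ x n, V = {y | π n y = π n x} ∧ IsLeast (level x) n}, ?_, ?_, ?_, ?_⟩
  · rintro _ ⟨x, n, rfl, -⟩
    exact isOpen_preimage_of_hasAntitoneBasis_fibers h n {π n x}
  · rintro _ ⟨x, m, rfl, hm⟩ _ ⟨x', n, rfl, hn⟩ hne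
    rw [Function.onFun, id, id, disjoint_left]
    intro z (hz : π m z = π m x) (hz' : π n z = π n x')
    wlog hmn : m ≤ n generalizing x x' m n
    · exact this x' n hn x m hm hne.symm hz' hz (le_of_not_ge hmn)
    have hx' : π m x' = π m x := (hfiber hmn hz').symm.trans hz
    obtain rfl : m = n := hmn.antisymm <| hn.2 <| by
      obtain ⟨U, hU, hxU⟩ := hm.1
      exact ⟨U, hU, by rwa [hx']⟩
    exact hne (by rw [hx'])
  · ext x
    constructor
    · rintro ⟨_, ⟨y, n, rfl, hn⟩, hx⟩
      obtain ⟨U, hU, hyU⟩ := hn.1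
      exact ⟨U, hU, hyU hx⟩
    · rintro ⟨U, hU, hx⟩
      obtain ⟨n, -, hn⟩ := (h x).1.mem_iff.1 ((h𝒰 U hU).mem_nhds hx)
      exact ⟨_, ⟨x, _, rfl, isLeast_csInf ⟨n, U, hU, hn⟩⟩, rfl⟩
  · rintro _ ⟨x, n, rfl, hn⟩
    exact hn.1

end FiberBasis

/-- `r` is the Cantor–Bendixson rank: `r x` is the least `c` such that all points near `x`, other
than `x`, have rank below `c`. A space carrying such a rank is scattered, and the rank is unique. -/
def IsCantorBendixsonRank {X α : Type*} [TopologicalSpace X] [LinearOrder α] (r : X → α) : Prop :=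
  ∀ x c, r x ≤ c ↔ ∀ᶠ y in 𝓝[≠] x, r y < c

theorem map_punctured_nhds_of_isOpenEmbedding {X Y : Type*} [TopologicalSpace X]
    [TopologicalSpace Y] {f : X → Y} (hf : IsOpenEmbedding f) (x : X) :
    map f (𝓝[≠] x) = 𝓝[≠] (f x) := by
  rw [← hf.map_nhdsWithin_preimage_eq, preimage_compl, ← image_singleton,
    preimage_image_eq _ hf.injective]

namespace IsCantorBendixsonRank

variable {X Y α : Type*} [TopologicalSpace X] [TopologicalSpace Y] [LinearOrder α]

theorem comp_homeomorph {r : Y → α} (hr : IsCantorBendixsonRank r) (h : X ≃ₜ Y) :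
    IsCantorBendixsonRank (r ∘ h) := fun x c => by
  rw [Function.comp_apply, hr, ← h.map_punctured_nhds_eq, eventually_map]
  rfl

theorem sumElim {r : X → α} {s : Y → α} (hr : IsCantorBendixsonRank r)
    (hs : IsCantorBendixsonRank s) : IsCantorBendixsonRank (Sum.elim r s) := by
  rintro (x | y) c
  · rw [← map_punctured_nhds_of_isOpenEmbedding .inl, eventually_map]
    exact hr x c
  · rw [← map_punctured_nhds_of_isOpenEmbedding .inr, eventually_map]
    exact hs y c

variable [WellFoundedLT α]

theorem le {r s : X → α} (hr : IsCantorBendixsonRank r) (hs : IsCantorBendixsonRank s) (x : X) :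
    s x ≤ r x := by
  induction h : r x using WellFoundedLT.induction generalizing x with
  | ind c ih =>
    rw [hs, ← h]
    filter_upwards [(hr x _).1 le_rfl] with y hy
    exact (ih (r y) (h ▸ hy) y rfl).trans_lt hy

protected theorem unique {r s : X → α} (hr : IsCantorBendixsonRank r)
    (hs : IsCantorBendixsonRank s) : r = s :=
  funext fun x => (hs.le hr x).antisymm (hr.le hs x)

theorem apply_homeomorph {r : X → α} {s : Y → α} (hr : IsCantorBendixsonRank r)
    (hs : IsCantorBendixsonRank s) (h : X ≃ₜ Y) (x : X) : s (h x) = r x :=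
  congrFun ((hs.comp_homeomorph h).unique hr) x

theorem scattered {X : Type} [TopologicalSpace X] {r : X → α} (hr : IsCantorBendixsonRank r) :
    Scattered X := by
  intro S hS
  obtain ⟨x, hxS, hmin⟩ := WellFounded.has_min (InvImage.wf r wellFounded_lt) S hS
  obtain ⟨U, hUo, hxU, hU⟩ := mem_nhdsWithin.1 ((hr x _).1 le_rfl)
  refine ⟨x, hxS, U, hUo, Subset.antisymm ?_ (singleton_subset_iff.2 ⟨hxU, hxS⟩)⟩
  rintro y ⟨hyU, hyS⟩
  by_contra hyx
  exact hmin y hyS (hU ⟨hyU, hyx⟩)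

end IsCantorBendixsonRank

/-- `A` converges to `x` locally: inside some neighbourhood of `x`, the set `A` is almost
contained in every neighbourhood of `x`. -/
def LocallyConverges {X : Type*} [TopologicalSpace X] (A : Set X) (x : X) : Prop :=
  ∃ U ∈ 𝓝 x, ∀ V ∈ 𝓝 x, ((A ∩ U) \ V).Finite

theorem locallyConverges_preimage_iff {X Y : Type*} [TopologicalSpace X] [TopologicalSpace Y]
    {f : X → Y} (hf : IsOpenEmbedding f) {A : Set Y} {x : X} :
    LocallyConverges (f ⁻¹' A) x ↔ LocallyConverges A (f x) := by
  constructor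
  · rintro ⟨U, hU, hfin⟩
    refine ⟨f '' U, hf.isOpenMap.image_mem_nhds hU, fun V hV => ?_⟩
    refine ((hfin _ (hf.continuous.continuousAt hV)).image f).subset ?_
    rintro _ ⟨⟨hA, y, hy, rfl⟩, hV⟩
    exact ⟨y, ⟨⟨hA, hy⟩, hV⟩, rfl⟩
  · rintro ⟨U, hU, hfin⟩
    refine ⟨f ⁻¹' U, hf.continuous.continuousAt hU, fun V hV => ?_⟩
    refine ((hfin _ (hf.isOpenMap.image_mem_nhds hV)).preimage hf.injective.injOn).subset ?_
    rintro y ⟨⟨hA, hyU⟩, hyV⟩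
    exact ⟨⟨hA, hyU⟩, fun h => hyV (hf.injective.mem_set_image.1 h)⟩

section FilterCharacter

variable {α β ι : Type u}

/-- The character of a filter: the least cardinality of a basis of it. For the neighbourhood
filter of a point this is the character of the space at that point. -/
noncomputable def filterCharacter (F : Filter α) : Cardinal.{u} :=
  sInf {c | ∃ B : Set (Set α), F.HasBasis (· ∈ B) id ∧ #B = c}

theorem exists_hasBasis_mk_eq_filterCharacter (F : Filter α) :
    ∃ B : Set (Set α), F.HasBasis (· ∈ B) id ∧ #B = filterCharacter F :=
  csInf_mem (s := {c | ∃ B : Set (Set α), F.HasBasis (· ∈ B) id ∧ #B = c})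
    ⟨_, F.sets, F.basis_sets, rfl⟩

theorem filterCharacter_le {F : Filter α} {p : ι → Prop} {s : ι → Set α} (h : F.HasBasis p s) :
    filterCharacter F ≤ #{i // p i} :=
  calc
    filterCharacter F ≤ #(s '' {i | p i}) := csInf_le' ⟨_, h.to_image_id, rfl⟩
    _ ≤ #{i // p i} := mk_image_le

theorem filterCharacter_map_le (F : Filter α) (f : α → β) :
    filterCharacter (map f F) ≤ filterCharacter F := by
  obtain ⟨B, hB, hcard⟩ := exists_hasBasis_mk_eq_filterCharacter F
  exact hcard ▸ filterCharacter_le (hB.map f)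

theorem filterCharacter_comap_le (F : Filter β) (f : α → β) :
    filterCharacter (comap f F) ≤ filterCharacter F := by
  obtain ⟨B, hB, hcard⟩ := exists_hasBasis_mk_eq_filterCharacter F
  exact hcard ▸ filterCharacter_le (hB.comap f)

theorem filterCharacter_map_of_injective (F : Filter α) {f : α → β} (hf : f.Injective) :
    filterCharacter (map f F) = filterCharacter F :=
  (filterCharacter_map_le F f).antisymm <| by
    simpa only [comap_map hf] using filterCharacter_comap_le (map f F) f

theorem filterCharacter_prod_le (F : Filter α) (G : Filter β) :
    filterCharacter (F ×ˢ G) ≤ filterCharacter F * filterCharacter G := by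
  obtain ⟨B, hB, hcardB⟩ := exists_hasBasis_mk_eq_filterCharacter F
  obtain ⟨C, hC, hcardC⟩ := exists_hasBasis_mk_eq_filterCharacter G
  rw [← hcardB, ← hcardC, ← mk_setProd]
  exact filterCharacter_le (hB.prod hC)

theorem filterCharacter_iInf_principal_le [Infinite ι] (A : ι → Set α) :
    filterCharacter (⨅ i, 𝓟 (A i)) ≤ #ι := by
  rw [← mk_finset_of_infinite ι, OrderIso.finsetSetFinite.toEquiv.cardinal_eq]
  exact filterCharacter_le (hasBasis_iInf_principal_finite A)

theorem filterCharacter_atTop_nat_le : filterCharacter (atTop : Filter ℕ) ≤ ℵ₀ :=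
  (filterCharacter_le atTop_basis).trans mk_le_aleph0

-- If a basis had fewer than `#ι` members, one of them would be contained in infinitely many `A i`.
theorem mk_le_filterCharacter [Infinite ι] {F : Filter α} {A : ι → Set α} (hA : ∀ i, A i ∈ F)
    (hfin : ∀ s ∈ F, {i | s ⊆ A i}.Finite) : #ι ≤ filterCharacter F := by
  obtain ⟨B, hB, hcard⟩ := exists_hasBasis_mk_eq_filterCharacter F
  choose b hb hbA using fun i => hB.mem_iff.1 (hA i)
  by_contra! hlt
  obtain ⟨s, hs⟩ := exists_infinite_fiber (fun i => (⟨b i, hb i⟩ : B)) (hcard.trans_lt hlt)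
  refine hs.not_finite ((hfin s (hB.mem_of_mem s.2)).subset ?_)
  rintro i rfl
  exact hbA i

end FilterCharacter

section Weight

variable {X Y : Type} [TopologicalSpace X] [TopologicalSpace Y]

theorem exists_isTopologicalBasis_mk_eq_tweight (X : Type) [TopologicalSpace X] :
    ∃ B : Set (Set X), TopologicalSpace.IsTopologicalBasis B ∧ #B = tweight X :=
  csInf_mem (s := {c | ∃ B : Set (Set X), TopologicalSpace.IsTopologicalBasis B ∧ #B = c})
    ⟨_, _, TopologicalSpace.isTopologicalBasis_opens, rfl⟩

theorem tweight_le {B : Set (Set X)} (hB : TopologicalSpace.IsTopologicalBasis B) :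
    tweight X ≤ #B :=
  csInf_le' ⟨B, hB, rfl⟩

theorem filterCharacter_nhdsWithin_le_tweight (a : X) (s : Set X) :
    filterCharacter (𝓝[s] a) ≤ tweight X := by
  obtain ⟨B, hB, hcard⟩ := exists_isTopologicalBasis_mk_eq_tweight X
  rw [← hcard]
  exact (filterCharacter_le (nhdsWithin_hasBasis hB.nhds_hasBasis s)).trans
    (mk_subtype_le_of_subset fun _ h => h.1)

theorem tweight_le_of_isInducing {f : X → Y} (hf : IsInducing f) : tweight X ≤ tweight Y := by
  obtain ⟨B, hB, hcard⟩ := exists_isTopologicalBasis_mk_eq_tweight Y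
  exact hcard ▸ (tweight_le (hB.isInducing hf)).trans mk_image_le

theorem tweight_sum_le (X Y : Type) [TopologicalSpace X] [TopologicalSpace Y] :
    tweight (X ⊕ Y) ≤ tweight X + tweight Y := by
  obtain ⟨B, hB, hcardB⟩ := exists_isTopologicalBasis_mk_eq_tweight X
  obtain ⟨C, hC, hcardC⟩ := exists_isTopologicalBasis_mk_eq_tweight Y
  rw [← hcardB, ← hcardC]
  exact (tweight_le (hB.sum hC)).trans <|
    (mk_union_le _ _).trans (add_le_add mk_image_le mk_image_le)

theorem tweight_le_of_hasAntitoneBasis_fibers {D : Type*} {π : ℕ → X → D}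
    (h : ∀ x, (𝓝 x).HasAntitoneBasis fun n => {y | π n y = π n x}) : tweight X ≤ ℵ₀ * #X := by
  have hB : TopologicalSpace.IsTopologicalBasis
      (range fun p : ℕ × X => {y | π p.1 y = π p.1 p.2}) := by
    refine TopologicalSpace.isTopologicalBasis_of_isOpen_of_nhds ?_ fun x U hx hU => ?_
    · rintro _ ⟨⟨n, x⟩, rfl⟩
      exact isOpen_preimage_of_hasAntitoneBasis_fibers h n {π n x}
    · obtain ⟨n, -, hn⟩ := (h x).1.mem_iff.1 (hU.mem_nhds hx)
      exact ⟨_, ⟨(n, x), rfl⟩, rfl, hn⟩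
  refine (tweight_le hB).trans (mk_range_le.trans_eq ?_)
  simp

end Weight

section OneNonisolatedPoint

variable {X : Type*} [TopologicalSpace X] {a : X} (ha : ∀ x ≠ a, IsOpen {x})

include ha

theorem isOpen_iff_of_isOpen_singleton {U : Set X} : IsOpen U ↔ (a ∈ U → U ∈ 𝓝 a) := by
  refine ⟨fun hU haU => hU.mem_nhds haU, fun h => isOpen_iff_mem_nhds.2 fun x hx => ?_⟩
  obtain rfl | hxa := eq_or_ne x a
  · exact h hx
  · exact mem_of_superset ((ha x hxa).mem_nhds rfl) (singleton_subset_iff.2 hx)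

theorem isOpen_of_notMem_of_isOpen_singleton {U : Set X} (haU : a ∉ U) : IsOpen U :=
  (isOpen_iff_of_isOpen_singleton ha).2 fun h => absurd h haU

theorem hereditarilyUltraparacompact_of_isOpen_singleton : HereditarilyUltraparacompact X := by
  classical
  intro 𝒰 h𝒰
  obtain ⟨U₀, hU₀, haU₀, hmem⟩ :
      ∃ U₀, IsOpen U₀ ∧ (a ∈ ⋃₀ 𝒰 → a ∈ U₀) ∧ (U₀.Nonempty → U₀ ∈ 𝒰) := by
    by_cases h : a ∈ ⋃₀ 𝒰
    · obtain ⟨U₀, hU₀, haU₀⟩ := h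
      exact ⟨U₀, h𝒰 U₀ hU₀, fun _ => haU₀, fun _ => hU₀⟩
    · exact ⟨∅, isOpen_empty, fun h' => absurd h' h, fun h' => absurd h' not_nonempty_empty⟩
  let cell (x : X) : Set X := if x ∈ U₀ then U₀ else {x}
  have cell_of_mem {x} (hx : x ∈ U₀) : cell x = U₀ := if_pos hx
  have cell_of_notMem {x} (hx : x ∉ U₀) : cell x = {x} := if_neg hx
  have hcell {x} (hx : x ∈ ⋃₀ 𝒰) : x ∈ cell x ∧ IsOpen (cell x) ∧ ∃ U ∈ 𝒰, cell x ⊆ U := by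
    by_cases hxU : x ∈ U₀
    · rw [cell_of_mem hxU]
      exact ⟨hxU, hU₀, U₀, hmem ⟨x, hxU⟩, subset_rfl⟩
    · rw [cell_of_notMem hxU]
      obtain ⟨U, hU, hxU'⟩ := hx
      refine ⟨rfl, ha x ?_, U, hU, singleton_subset_iff.2 hxU'⟩
      rintro rfl
      exact hxU (haU₀ ⟨U, hU, hxU'⟩)
  have hdisj (x y z) (hx : z ∈ cell x) (hy : z ∈ cell y) : cell x = cell y := by
    grind
  refine ⟨cell '' ⋃₀ 𝒰, ?_, ?_, ?_, ?_⟩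
  · exact forall_mem_image.2 fun x hx => (hcell hx).2.1
  · rintro _ ⟨x, -, rfl⟩ _ ⟨y, -, rfl⟩ hne
    exact disjoint_left.2 fun z hx hy => hne (hdisj x y z hx hy)
  · refine Subset.antisymm (sUnion_subset ?_) fun x hx => ⟨_, mem_image_of_mem _ hx, (hcell hx).1⟩
    rintro _ ⟨x, hx, rfl⟩
    obtain ⟨U, hU, hxU⟩ := (hcell hx).2.2
    exact hxU.trans (subset_sUnion_of_mem hU)
  · exact forall_mem_image.2 fun x hx => (hcell hx).2.2

theorem isGδ_of_isOpen_singleton (hGδ : IsGδ {a}) (C : Set X) : IsGδ C := by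
  have hopen : IsGδ (C \ {a}) := (isOpen_of_notMem_of_isOpen_singleton ha (by simp)).isGδ
  by_cases haC : a ∈ C
  · simpa [haC] using hGδ.union hopen
  · rwa [sdiff_singleton_eq_self haC] at hopen

theorem t1Space_of_isOpen_singleton (hGδ : IsGδ {a}) : T1Space X where
  t1 x := by
    rw [← isOpen_compl_iff, isOpen_iff_of_isOpen_singleton ha]
    intro hx
    obtain ⟨U, hU, hUa⟩ := isGδ_iff_eq_iInter_nat.1 hGδ
    obtain ⟨n, hn⟩ : ∃ n, x ∉ U n := by
      rw [← not_forall, ← mem_iInter, ← hUa]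
      exact fun h => hx h.symm
    have han : a ∈ U n := mem_iInter.1 (hUa ▸ mem_singleton a) n
    exact mem_of_superset ((hU n).mem_nhds han) (subset_compl_singleton_iff.2 hn)

theorem extremallyDisconnected_of_isOpen_singleton (V : Ultrafilter X) (hV : 𝓝[≠] a = V) :
    ExtremallyDisconnected X where
  open_closure U hU := by
    rw [isOpen_iff_of_isOpen_singleton ha]
    intro haU
    by_cases h : a ∈ U
    · exact mem_of_superset (hU.mem_nhds h) subset_closure
    · have hfreq : ∃ᶠ x in 𝓝[≠] a, x ∈ U := frequently_nhdsWithin_iff.2 <|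
        (mem_closure_iff_frequently.1 haU).mono fun x hx => ⟨hx, ne_of_mem_of_not_mem hx h⟩
      rw [hV, Ultrafilter.frequently_iff_eventually, ← hV] at hfreq
      exact mem_of_superset (insert_mem_nhds_iff.2 hfreq) (insert_subset haU subset_closure)

theorem punctured_nhds_eq_bot_of_isOpen_singleton {x : X} (hx : x ≠ a) : 𝓝[≠] x = ⊥ :=
  (isOpen_singleton_iff_punctured_nhds x).1 (ha x hx)

theorem apply_eq_of_isOpen_singleton {Y : Type*} [TopologicalSpace Y] {b : Y} [(𝓝[≠] b).NeBot]
    (h : Y ≃ₜ X) : h b = a := by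
  by_contra hne
  have hbot := punctured_nhds_eq_bot_of_isOpen_singleton ha hne
  rw [← h.map_punctured_nhds_eq, map_eq_bot_iff] at hbot
  exact NeBot.ne' hbot

theorem isCantorBendixsonRank_of_isOpen_singleton {α : Type*} [LinearOrder α] [OrderBot α]
    [(𝓝[≠] a).NeBot] {r : X → α} (hra : ⊥ ⋖ r a) (hr : ∀ x ≠ a, r x = ⊥) :
    IsCantorBendixsonRank r := by
  intro x c
  obtain rfl | hxa := eq_or_ne x a
  · have hbot : ∀ᶠ y in 𝓝[≠] x, r y = ⊥ := eventually_mem_nhdsWithin.mono hr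
    calc
      r x ≤ c ↔ ⊥ < c := ⟨hra.lt.trans_le, hra.ge_of_gt⟩
      _ ↔ ∀ᶠ _ in 𝓝[≠] x, ⊥ < c := eventually_const.symm
      _ ↔ ∀ᶠ y in 𝓝[≠] x, r y < c := eventually_congr (hbot.mono fun y hy => by rw [hy])
  · simp [hr x hxa, punctured_nhds_eq_bot_of_isOpen_singleton ha hxa]

end OneNonisolatedPoint

theorem almostDiscrete_of_isOpen_singleton {X : Type} [TopologicalSpace X] {a : X}
    (ha : ∀ x ≠ a, IsOpen {x}) (hGδ : IsGδ {a}) : AlmostDiscrete X := by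
  have := t1Space_of_isOpen_singleton ha hGδ
  have := (hereditarilyUltraparacompact_of_isOpen_singleton ha).normalSpace
  refine ⟨inferInstance, a, discreteTopology_iff_isOpen_singleton.2 fun x => ?_⟩
  rw [← Subtype.val_injective.preimage_image {x}, image_singleton]
  exact (ha x x.2).preimage continuous_subtype_val

theorem tweight_eq_of_isOpen_singleton {X : Type} [TopologicalSpace X] [Infinite X] {a : X}
    (ha : ∀ x ≠ a, IsOpen {x}) (hX : #X ≤ filterCharacter (𝓝[≠] a)) :
    tweight X = filterCharacter (𝓝[≠] a) := by
  refine le_antisymm ?_ (filterCharacter_nhdsWithin_le_tweight a _)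
  obtain ⟨B, hB, hcard⟩ := exists_hasBasis_mk_eq_filterCharacter (𝓝[≠] a)
  have hbasis : TopologicalSpace.IsTopologicalBasis
      (insert a '' B ∪ (fun x => {x}) '' {a}ᶜ : Set (Set X)) := by
    refine TopologicalSpace.isTopologicalBasis_of_isOpen_of_nhds ?_ fun x U hx hU => ?_
    · rintro _ (⟨s, hs, rfl⟩ | ⟨x, hx, rfl⟩)
      · exact (isOpen_iff_of_isOpen_singleton ha).2 fun _ =>
          insert_mem_nhds_iff.2 (hB.mem_of_mem hs)
      · exact ha x hx
    · obtain rfl | hxa := eq_or_ne x a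
      · obtain ⟨s, hs, hsU⟩ := hB.mem_iff.1 (mem_nhdsWithin_of_mem_nhds (hU.mem_nhds hx))
        exact ⟨_, .inl (mem_image_of_mem _ hs), mem_insert x s, insert_subset hx hsU⟩
      · exact ⟨{x}, .inr (mem_image_of_mem _ hxa), rfl, singleton_subset_iff.2 hx⟩
  calc
    tweight X ≤ #(insert a '' B ∪ (fun x => {x}) '' {a}ᶜ : Set (Set X)) := tweight_le hbasis
    _ ≤ #B + #X := (mk_union_le _ _).trans
      (add_le_add mk_image_le (mk_image_le.trans (mk_set_le _)))
    _ = filterCharacter (𝓝[≠] a) := by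
      rw [hcard, add_eq_left ((aleph0_le_mk X).trans hX) hX]

/-- The requirements made of every space in the theorem, with cardinality `κ` and weight `lam`. -/
def IsScatteredPerfectSpace (κ lam : Cardinal) (X : Type) [TopologicalSpace X] : Prop :=
  Scattered X ∧ StronglyZeroDimensional X ∧ HereditarilyParacompact X ∧ PerfectlyNormal X ∧
    #X = κ ∧ tweight X = lam

theorem IsScatteredPerfectSpace.of_hereditarilyUltraparacompact {κ lam : Cardinal} {X : Type}
    [TopologicalSpace X] (hs : Scattered X) (hX : HereditarilyUltraparacompact X)
    (hGδ : ∀ C : Set X, IsClosed C → IsGδ C) (hκ : #X = κ) (hlam : tweight X = lam) :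
    IsScatteredPerfectSpace κ lam X :=
  ⟨hs, hX.stronglyZeroDimensional, hX.hereditarilyParacompact, ⟨hX.normalSpace, hGδ⟩, hκ, hlam⟩

/-- The space obtained by adding to a discrete space `K` one point `infty`, whose punctured
neighbourhoods are the members of the filter `F` on `K`. -/
inductive FilterSpace {K : Type*} (F : Filter K) : Type _
  | infty
  | of (k : K)

namespace FilterSpace

instance {K : Type*} (F : Filter K) : TopologicalSpace (FilterSpace F) :=
  nhdsAdjoint infty (map of F)

variable {K L : Type*} {F : Filter K} {G : Filter L}

theorem of_injective : Function.Injective (of : K → FilterSpace F) := fun _ _ => of.inj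

theorem isOpen_singleton (x : FilterSpace F) (hx : x ≠ infty) : IsOpen {x} :=
  isOpen_singleton_nhdsAdjoint _ hx

theorem nhds_infty : 𝓝 (infty : FilterSpace F) = pure infty ⊔ map of F :=
  nhds_nhdsAdjoint_same _ _

theorem punctured_nhds_infty : 𝓝[≠] (infty : FilterSpace F) = map of F := by
  have hof : map of F ≤ 𝓟 ({infty}ᶜ : Set (FilterSpace F)) :=
    le_principal_iff.2 (mem_map.2 (univ_mem' fun k => by simp))
  rw [nhdsWithin, nhds_infty, inf_sup_right, inf_eq_left.2 hof, ← principal_singleton,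
    inf_principal, inter_compl_self, principal_empty, bot_sup_eq]

instance [NeBot F] : NeBot (𝓝[≠] (infty : FilterSpace F)) :=
  punctured_nhds_infty.symm ▸ inferInstance

theorem isGδ_singleton_infty {g : K → ℕ} (hg : Tendsto g F atTop) :
    IsGδ {(infty : FilterSpace F)} := by
  have hinfty : {(infty : FilterSpace F)} = ⋂ n, insert infty (of '' (g ⁻¹' Ici n)) := by
    refine Subset.antisymm (by simp) ?_
    rintro (_ | k) hk
    · rfl
    · simpa using mem_iInter.1 hk (g k + 1)
  rw [hinfty]
  refine .iInter fun n => IsOpen.isGδ ?_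
  rw [isOpen_iff_of_isOpen_singleton isOpen_singleton, insert_mem_nhds_iff, punctured_nhds_infty]
  exact fun _ => image_mem_map (hg (Ici_mem_atTop n))

/-- The function with value `c` at `infty` and `⊥` at the isolated points; it is the
Cantor–Bendixson rank when `c` covers `⊥`. -/
def rank {α : Type*} [Bot α] (c : α) : FilterSpace F → α
  | infty => c
  | of _ => ⊥

theorem isCantorBendixsonRank_rank [NeBot F] {α : Type*} [LinearOrder α] [OrderBot α] {c : α}
    (hc : ⊥ ⋖ c) : IsCantorBendixsonRank (rank c : FilterSpace F → α) :=
  isCantorBendixsonRank_of_isOpen_singleton isOpen_singleton hc fun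
    | infty, h => absurd rfl h
    | of _, _ => rfl

theorem exists_map_eq_of_homeomorph [NeBot F] [NeBot G] (h : FilterSpace F ≃ₜ FilterSpace G) :
    ∃ ρ : K → L, map ρ F = G := by
  have : Nonempty L := G.nonempty_of_neBot
  refine ⟨Function.invFun of ∘ h ∘ of, ?_⟩
  have hmap : map h (map of F) = map of G := by
    rw [← punctured_nhds_infty, h.map_punctured_nhds_eq,
      apply_eq_of_isOpen_singleton isOpen_singleton, punctured_nhds_infty]
  rw [← map_map, ← map_map, hmap, map_map, Function.invFun_comp of_injective, map_id]

theorem mk_eq [Infinite K] : #(FilterSpace F) = #K := by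
  let e : FilterSpace F ≃ Option K :=
    { toFun
        | infty => none
        | of k => some k
      invFun x := x.elim infty of
      left_inv := by rintro (_ | _) <;> rfl
      right_inv := by rintro (_ | _) <;> rfl }
  rw [e.cardinal_eq, mk_option, mk_add_one_eq]

theorem tweight_eq {K : Type} [Infinite K] {F : Filter K} (hK : #K ≤ filterCharacter F) :
    tweight (FilterSpace F) = filterCharacter F := by
  have : Infinite (FilterSpace F) := .of_injective of of_injective
  have hF : filterCharacter (𝓝[≠] (infty : FilterSpace F)) = filterCharacter F := by
    rw [punctured_nhds_infty, filterCharacter_map_of_injective F of_injective]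
  rw [← hF] at hK ⊢
  exact tweight_eq_of_isOpen_singleton isOpen_singleton (mk_eq.trans_le hK)

theorem extremallyDisconnected (U : Ultrafilter K) :
    ExtremallyDisconnected (FilterSpace (U : Filter K)) :=
  extremallyDisconnected_of_isOpen_singleton isOpen_singleton (U.map of) punctured_nhds_infty

theorem isScatteredPerfectSpace {K : Type} [Infinite K] {F : Filter K} [NeBot F]
    (hK : #K ≤ filterCharacter F) {g : K → ℕ} (hg : Tendsto g F atTop) :
    IsScatteredPerfectSpace #K (filterCharacter F) (FilterSpace F) :=
  .of_hereditarilyUltraparacompact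
    (isCantorBendixsonRank_rank (bot_covBy_top (α := Bool))).scattered
    (hereditarilyUltraparacompact_of_isOpen_singleton isOpen_singleton)
    (fun C _ => isGδ_of_isOpen_singleton isOpen_singleton (isGδ_singleton_infty hg) C)
    mk_eq (tweight_eq hK)

theorem almostDiscrete {K : Type} {F : Filter K} {g : K → ℕ} (hg : Tendsto g F atTop) :
    AlmostDiscrete (FilterSpace F) :=
  almostDiscrete_of_isOpen_singleton isOpen_singleton (isGδ_singleton_infty hg)

end FilterSpace

theorem ExistsNonHomeoFamily.mono {n : Cardinal} {P Q : (X : Type) → TopologicalSpace X → Prop}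
    (h : ExistsNonHomeoFamily n P) (hPQ : ∀ X t, P X t → Q X t) : ExistsNonHomeoFamily n Q := by
  obtain ⟨ι, F, t, hι, hP, hF⟩ := h
  exact ⟨ι, F, t, hι, fun i => hPQ _ _ (hP i), hF⟩

-- Choose one index in each of the `#ι` homeomorphism classes.
theorem existsNonHomeoFamily_of_mk_homeomorphic_le {ι : Type} {X : ι → Type}
    [∀ i, TopologicalSpace (X i)] {P : (X : Type) → TopologicalSpace X → Prop} [Infinite ι]
    (hP : ∀ i, P (X i) inferInstance) {c : Cardinal} (hc : c < #ι)
    (hX : ∀ i, #{j // Nonempty (X i ≃ₜ X j)} ≤ c) : ExistsNonHomeoFamily #ι P := by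
  let s : Setoid ι :=
    { r i j := Nonempty (X i ≃ₜ X j)
      iseqv :=
        { refl i := ⟨.refl _⟩
          symm := fun ⟨h⟩ => ⟨h.symm⟩
          trans := fun ⟨h⟩ ⟨h'⟩ => ⟨h.trans h'⟩ } }
  have hquot : #(Quotient s) = #ι := by
    refine mk_quotient_le.antisymm (not_lt.1 fun hlt => ?_)
    have hfiber (q : Quotient s) : #(Quotient.mk s ⁻¹' {q}) ≤ c := by
      induction q using Quotient.ind with
      | _ i =>
        refine (mk_subtype_le_of_subset fun j hj => ?_).trans (hX i)
        exact Quotient.exact (Eq.symm hj)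
    exact ((mk_le_mk_mul_of_mk_preimage_le _ hfiber).trans_lt
      (mul_lt_of_lt (aleph0_le_mk ι) hlt hc)).false
  refine ⟨Quotient s, fun q => X q.out, fun q => inferInstance, hquot, fun q => hP _, ?_⟩
  refine fun p q hpq => ⟨fun h => hpq ?_⟩
  rw [← p.out_eq, ← q.out_eq]
  exact Quotient.sound ⟨h⟩

-- A homeomorphism is determined up to the choice of a self-map of `M`, hence the bound `2 ^ #M` on
-- the size of each homeomorphism class.
theorem existsNonHomeoFamily_filterSpace {ι K M : Type} [Infinite M] {F : ι → Filter M}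
    (hF : F.Injective) [∀ i, NeBot (F i)] {e : M → K} (he : e.Injective)
    (hι : (2 : Cardinal) ^ #M < #ι) {P : (X : Type) → TopologicalSpace X → Prop}
    (hP : ∀ i, P (FilterSpace (map e (F i))) inferInstance) : ExistsNonHomeoFamily #ι P := by
  have : Infinite ι := infinite_iff.2 <|
    (aleph0_le_mk M).trans ((cantor _).le.trans hι.le)
  refine existsNonHomeoFamily_of_mk_homeomorphic_le hP hι fun i => ?_
  have hρ (j : {j // Nonempty (FilterSpace (map e (F i)) ≃ₜ FilterSpace (map e (F j)))}) :
      ∃ ρ : M → M, map ρ (F i) = F j := by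
    obtain ⟨j, ⟨h⟩⟩ := j
    obtain ⟨σ, hσ⟩ := FilterSpace.exists_map_eq_of_homeomorph h
    refine ⟨Function.invFun e ∘ σ ∘ e, ?_⟩
    rw [← map_map, ← map_map, hσ, map_map, Function.invFun_comp he, map_id]
  choose ρ hρ using hρ
  have hinj : ρ.Injective := fun j k hjk =>
    Subtype.ext (hF (by rw [← hρ j, ← hρ k, hjk]))
  exact (mk_le_of_injective hinj).trans (by rw [← power_def, power_self_eq (aleph0_le_mk M)])

section IndependentFamily

/-- The set `A i` if `i ∈ f`, and its complement otherwise. -/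
def signedSet {J M : Type*} (A : J → Set M) (f : Set J) (i : J) : Set M :=
  {m | m ∈ A i ↔ i ∈ f}

theorem mem_signedSet {J M : Type*} {A : J → Set M} {f : Set J} {i : J} {m : M} :
    m ∈ signedSet A f i ↔ (m ∈ A i ↔ i ∈ f) :=
  Iff.rfl

/-- A family of sets is independent if any choice of finitely many members and of complements of
finitely many other members has a nonempty intersection. -/
def IndependentFamily {J M : Type*} (A : J → Set M) : Prop :=
  ∀ (f : Set J) (a : Finset J), (⋂ i ∈ a, signedSet A f i).Nonempty

-- Hausdorff's construction: on pairs of a finite set `D` and a finite family of subsets of `D`,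
-- the set indexed by `x` says that the trace of `x` on `D` belongs to the family. Finitely many
-- sets `x` have distinct traces on a suitable `D`.
theorem independentFamily_trace_mem {N : Type*} [Nonempty N] :
    IndependentFamily fun x : Set N =>
      {p : Finset N × Finset (Finset N) | ∃ s ∈ p.2, (s : Set N) = ↑p.1 ∩ x} := by
  classical
  intro f a
  have hsep (x y : Set N) : ∃ n, x ≠ y → ¬ (n ∈ x ↔ n ∈ y) := by
    by_cases hxy : x = y
    · exact ⟨Classical.arbitrary N, fun h => absurd hxy h⟩
    · obtain ⟨n, hn⟩ := not_forall.1 (mt Set.ext hxy)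
      exact ⟨n, fun _ => hn⟩
  choose n hn using hsep
  let D : Finset N := (a ×ˢ a).image fun q => n q.1 q.2
  have trace_inj {x y : Set N} (hx : x ∈ a) (hy : y ∈ a) (h : ↑D ∩ x = ↑D ∩ y) : x = y := by
    have hD : n x y ∈ D := Finset.mem_image.2 ⟨(x, y), Finset.mk_mem_product hx hy, rfl⟩
    by_contra hxy
    have := Set.ext_iff.1 h (n x y)
    simp only [mem_inter_iff, Finset.mem_coe, hD, true_and] at this
    exact hn x y hxy this
  have coe_trace (x : Set N) : (D.filter (· ∈ x) : Set N) = ↑D ∩ x := by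
    rw [Finset.coe_filter]; rfl
  refine ⟨(D, (a.filter (· ∈ f)).image fun x => D.filter (· ∈ x)), mem_iInter₂.2 fun x hx => ?_⟩
  simp only [mem_signedSet, mem_ofPred_eq, Finset.exists_mem_image, Finset.mem_filter, coe_trace]
  constructor
  · rintro ⟨y, ⟨hya, hyf⟩, hyx⟩
    exact trace_inj hya hx hyx ▸ hyf
  · exact fun hxf => ⟨x, ⟨hx, hxf⟩, rfl⟩

namespace IndependentFamily

variable {J M : Type*} {A : J → Set M}

theorem comp_injective (hA : IndependentFamily A) {I : Type*} {g : I → J} (hg : g.Injective) :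
    IndependentFamily (A ∘ g) := by
  classical
  intro f a
  obtain ⟨m, hm⟩ := hA (g '' f) (a.image g)
  refine ⟨m, mem_iInter₂.2 fun i hi => ?_⟩
  have := mem_iInter₂.1 hm (g i) (Finset.mem_image_of_mem g hi)
  rwa [mem_signedSet, hg.mem_set_image] at this

theorem preimage (hA : IndependentFamily A) {L : Type*} {φ : L → M} (hφ : φ.Surjective) :
    IndependentFamily fun i => φ ⁻¹' A i := fun f a => by
  obtain ⟨m, hm⟩ := hA f a
  obtain ⟨l, rfl⟩ := hφ m
  exact ⟨l, mem_iInter₂.2 fun i hi => mem_iInter₂.1 hm i hi⟩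

end IndependentFamily

theorem exists_independentFamily {J N : Type u} [Infinite N] (h : #J ≤ 2 ^ #N) :
    ∃ A : J → Set N, IndependentFamily A := by
  rw [← mk_set] at h
  obtain ⟨g⟩ := h
  have hcard : #N = #(Finset N × Finset (Finset N)) := by
    rw [← mul_def, mk_finset_of_infinite, mk_finset_of_infinite, mk_finset_of_infinite,
      mul_mk_eq_max, max_self]
  obtain ⟨φ⟩ := Cardinal.eq.1 hcard
  exact ⟨_, (independentFamily_trace_mem.comp_injective g.injective).preimage φ.surjective⟩

theorem eq_of_signedSet_mem {J M : Type*} {A : J → Set M} {F : Filter M} [NeBot F] {f g : Set J}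
    (hf : ∀ i, signedSet A f i ∈ F) (hg : ∀ i, signedSet A g i ∈ F) : f = g := by
  ext i
  obtain ⟨m, hmf, hmg⟩ := F.nonempty_of_mem (inter_mem (hf i) (hg i))
  exact hmf.symm.trans hmg

/-- The filter generated by the sets `signedSet A f i`. -/
def signedFilter {J M : Type*} (A : J → Set M) (f : Set J) : Filter M :=
  ⨅ i, 𝓟 (signedSet A f i)

theorem signedSet_mem_signedFilter {J M : Type*} (A : J → Set M) (f : Set J) (i : J) :
    signedSet A f i ∈ signedFilter A f :=
  mem_iInf_of_mem i (mem_principal_self _)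

namespace IndependentFamily

variable {J M : Type*} {A : J → Set M}

theorem neBot_signedFilter (hA : IndependentFamily A) (f : Set J) : NeBot (signedFilter A f) :=
  (hasBasis_iInf_principal_finite _).neBot_iff.2 fun {t} ht => by
    simpa using hA f ht.toFinset

theorem exists_mem_signedSet_notMem (hA : IndependentFamily A) (f : Set J) {a b : Finset J}
    (hab : Disjoint a b) :
    ∃ m, (∀ i ∈ a, m ∈ signedSet A f i) ∧ ∀ i ∈ b, m ∉ signedSet A f i := by
  classical
  obtain ⟨m, hm⟩ := hA {i | i ∈ a ↔ i ∈ f} (a ∪ b)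
  have hm' {i} (hi : i ∈ a ∪ b) : m ∈ A i ↔ (i ∈ a ↔ i ∈ f) := mem_iInter₂.1 hm i hi
  refine ⟨m, fun i hi => ?_, fun i hi => ?_⟩
  · simpa [hi, mem_signedSet] using hm' (Finset.mem_union_left b hi)
  · have hia : i ∉ a := Finset.disjoint_right.1 hab hi
    have := hm' (Finset.mem_union_right a hi)
    rw [mem_signedSet]
    tauto

theorem finite_subset_signedSet (hA : IndependentFamily A) (f : Set J) {s : Set M}
    (hs : s ∈ signedFilter A f) : {i | s ⊆ signedSet A f i}.Finite := by
  obtain ⟨t, ht, hts⟩ := (hasBasis_iInf_principal_finite _).mem_iff.1 hs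
  refine ht.subset fun i hi => by_contra fun hit => ?_
  obtain ⟨m, hmt, hmi⟩ := hA.exists_mem_signedSet_notMem f (a := ht.toFinset) (b := {i}) (by simpa)
  refine hmi i (Finset.mem_singleton_self i) (hi (hts (mem_iInter₂.2 fun j hj => hmt j ?_)))
  exact ht.mem_toFinset.2 hj

-- The ultrafilter extends `signedFilter A f` together with the complements of all sets contained in
-- infinitely many `signedSet A f i`.
theorem exists_ultrafilter (hA : IndependentFamily A) (f : Set J) :
    ∃ U : Ultrafilter M, (∀ i, signedSet A f i ∈ U) ∧
      ∀ s ∈ U, {i | s ⊆ signedSet A f i}.Finite := by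
  classical
  let C : Set (Set M) := {c | {i | cᶜ ⊆ signedSet A f i}.Infinite}
  have hne : NeBot (signedFilter A f ⊓ generate C) := by
    refine ((hasBasis_iInf_principal_finite _).inf_basis_neBot_iff (hasBasis_generate C)).2 ?_
    rintro a ha T ⟨hT, hTC⟩
    have hsel (c : T) : ∃ i, i ∉ a ∧ (c : Set M)ᶜ ⊆ signedSet A f i := by
      obtain ⟨i, hi, hia⟩ := (hTC c.2).exists_notMem_finite ha
      exact ⟨i, hia, hi⟩
    choose i hia hi using hsel
    have := hT.fintype
    have hdisj : Disjoint ha.toFinset (Finset.univ.image i) := by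
      refine Finset.disjoint_right.2 (Finset.forall_mem_image.2 fun c _ h => hia c ?_)
      exact ha.mem_toFinset.1 h
    obtain ⟨m, hma, hmi⟩ := hA.exists_mem_signedSet_notMem f hdisj
    refine ⟨m, by simpa using hma, fun c hc => by_contra fun hmc => ?_⟩
    exact hmi (i ⟨c, hc⟩) (by simp) (hi ⟨c, hc⟩ hmc)
  refine ⟨.of (signedFilter A f ⊓ generate C), fun i => ?_, fun s hs => by_contra fun hinf => ?_⟩
  · exact Ultrafilter.of_le _ (mem_inf_of_left (signedSet_mem_signedFilter A f i))
  · have hsC : sᶜ ∈ generate C :=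
      mem_generate_of_mem (by rwa [mem_ofPred_eq, compl_compl])
    exact Ultrafilter.compl_mem_iff_notMem.1 (Ultrafilter.of_le _ (mem_inf_of_right hsC)) hs

end IndependentFamily

end IndependentFamily

theorem filterCharacter_le_two_power {M : Type*} (F : Filter M) : filterCharacter F ≤ 2 ^ #M :=
  (filterCharacter_le F.basis_sets).trans ((mk_set_le _).trans_eq mk_set)

theorem filterCharacter_signedFilter {J M : Type u} [Infinite J] {A : J → Set M}
    (hA : IndependentFamily A) (f : Set J) : filterCharacter (signedFilter A f) = #J :=
  (filterCharacter_iInf_principal_le _).antisymm <|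
    mk_le_filterCharacter (signedSet_mem_signedFilter A f) fun _ hs =>
      hA.finite_subset_signedSet f hs

theorem exists_injective_filter_filterCharacter_eq {J N : Type} [Infinite J] [Infinite N]
    (h : #J ≤ 2 ^ #N) :
    ∃ F : Set J → Filter (ℕ × N), F.Injective ∧
      ∀ f, NeBot (F f) ∧ Tendsto Prod.fst (F f) atTop ∧ filterCharacter (F f) = #J := by
  obtain ⟨A, hA⟩ := exists_independentFamily h
  have hne := hA.neBot_signedFilter
  have hmap (f : Set J) :
      map Prod.snd ((atTop : Filter ℕ) ×ˢ signedFilter A f) = signedFilter A f :=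
    map_snd_prod _ _
  refine ⟨fun f => atTop ×ˢ signedFilter A f, fun f g hfg => ?_, fun f =>
    ⟨inferInstance, tendsto_fst, le_antisymm ?_ ?_⟩⟩
  · have hfg' : signedFilter A f = signedFilter A g := by
      rw [← hmap f, ← hmap g]; exact congrArg _ hfg
    exact eq_of_signedSet_mem (signedSet_mem_signedFilter A f)
      (hfg' ▸ signedSet_mem_signedFilter A g)
  · calc
      filterCharacter ((atTop : Filter ℕ) ×ˢ signedFilter A f) ≤ ℵ₀ * #J :=
        (filterCharacter_prod_le _ _).trans
          (mul_le_mul' filterCharacter_atTop_nat_le (filterCharacter_signedFilter hA f).le)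
      _ = #J := aleph0_mul_mk_eq
  · rw [← filterCharacter_signedFilter hA f, ← hmap f]
    exact filterCharacter_map_le _ _

theorem exists_injective_ultrafilter_filterCharacter_eq {N : Type} [Infinite N] :
    ∃ U : Set (Set N) → Ultrafilter (ℕ × N), U.Injective ∧
      ∀ f, Tendsto Prod.fst (U f : Filter (ℕ × N)) atTop ∧
        filterCharacter (U f : Filter (ℕ × N)) = 2 ^ #N := by
  obtain ⟨A, hA⟩ := exists_independentFamily (J := Set N) mk_set.le
  choose V hVmem hVfin using hA.exists_ultrafilter
  let U (f : Set (Set N)) : Ultrafilter (ℕ × N) := .of (atTop ×ˢ V f)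
  have hle (f : Set (Set N)) : (U f : Filter (ℕ × N)) ≤ atTop ×ˢ (V f : Filter N) :=
    Ultrafilter.of_le _
  have hmap (f : Set (Set N)) : (U f).map Prod.snd = V f :=
    Ultrafilter.coe_le_coe.1 (tendsto_snd.mono_left (hle f))
  refine ⟨U, fun f g hfg => ?_, fun f => ⟨tendsto_fst.mono_left (hle f), le_antisymm ?_ ?_⟩⟩
  · have hVfg : V f = V g := by rw [← hmap f, ← hmap g, hfg]
    have hVmem_g (i : Set N) : signedSet A g i ∈ (V f : Filter N) := by
      rw [hVfg]
      exact hVmem g i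
    exact eq_of_signedSet_mem (hVmem f) hVmem_g
  · simpa using filterCharacter_le_two_power (U f : Filter (ℕ × N))
  · calc
      2 ^ #N = #(Set N) := mk_set.symm
      _ ≤ filterCharacter (V f : Filter N) := mk_le_filterCharacter (hVmem f) (hVfin f)
      _ ≤ filterCharacter (U f : Filter (ℕ × N)) := by
        rw [← hmap f]
        exact filterCharacter_map_le _ _

theorem nonempty_nat_prod_embedding {K N : Type} [Infinite N] (h : #N ≤ #K) :
    Nonempty (ℕ × N ↪ K) := by
  rwa [← Cardinal.le_def, mk_prod, lift_id, lift_id, mk_nat, aleph0_mul_mk_eq]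

theorem tendsto_extend_map {M K γ : Type*} {F : Filter M} {l : Filter γ} {e : M → K}
    (he : e.Injective) {g : M → γ} (hg : Tendsto g F l) (g' : K → γ) :
    Tendsto (Function.extend e g g') (map e F) l := by
  rwa [tendsto_map'_iff, Function.extend_comp he]

theorem existsNonHomeoFamily_almostDiscrete {J K N : Type} [Infinite N] (hNK : #N ≤ #K)
    (hKJ : #K ≤ #J) (hJN : #J ≤ 2 ^ #N) (hlt : (2 : Cardinal) ^ #N < 2 ^ #J) :
    ExistsNonHomeoFamily (2 ^ #J) fun X t =>
      letI := t
      IsScatteredPerfectSpace #K #J X ∧ AlmostDiscrete X := by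
  obtain ⟨e⟩ := nonempty_nat_prod_embedding hNK
  have : Infinite K := .of_injective e e.injective
  have : Infinite J := infinite_iff.2 ((aleph0_le_mk K).trans hKJ)
  obtain ⟨F, hF, hF'⟩ := exists_injective_filter_filterCharacter_eq hJN
  choose hne htends hchar using hF'
  have hchar' (f : Set J) : filterCharacter (map e (F f)) = #J := by
    rw [filterCharacter_map_of_injective _ e.injective, hchar]
  rw [← mk_set] at hlt ⊢
  refine existsNonHomeoFamily_filterSpace hF e.injective (by simpa using hlt) fun f => ?_
  have hg := tendsto_extend_map e.injective (htends f) 0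
  exact ⟨hchar' f ▸ FilterSpace.isScatteredPerfectSpace (hKJ.trans_eq (hchar' f).symm) hg,
    FilterSpace.almostDiscrete hg⟩

theorem existsNonHomeoFamily_extremallyDisconnected {K N : Type} [Infinite N] (hNK : #N ≤ #K)
    (hKN : #K ≤ 2 ^ #N) :
    ExistsNonHomeoFamily (2 ^ (2 : Cardinal) ^ #N) fun X t =>
      letI := t
      IsScatteredPerfectSpace #K (2 ^ #N) X ∧ AlmostDiscrete X ∧ ExtremallyDisconnected X := by
  obtain ⟨e⟩ := nonempty_nat_prod_embedding hNK
  have : Infinite K := .of_injective e e.injective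
  obtain ⟨U, hU, hU'⟩ := exists_injective_ultrafilter_filterCharacter_eq (N := N)
  choose htends hchar using hU'
  have hchar' (f : Set (Set N)) : filterCharacter (map e (U f : Filter (ℕ × N))) = 2 ^ #N := by
    rw [filterCharacter_map_of_injective _ e.injective, hchar]
  have hcard : #(Set (Set N)) = 2 ^ (2 : Cardinal) ^ #N := by rw [mk_set, mk_set]
  have hlt : (2 : Cardinal) ^ #(ℕ × N) < #(Set (Set N)) := by simpa using cantor (2 ^ #N)
  rw [← hcard]
  refine existsNonHomeoFamily_filterSpace (F := fun f => (U f : Filter (ℕ × N)))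
    (Ultrafilter.coe_injective.comp hU) e.injective hlt fun f => ?_
  have hg := tendsto_extend_map e.injective (htends f) 0
  exact ⟨hchar' f ▸ FilterSpace.isScatteredPerfectSpace (hKN.trans_eq (hchar' f).symm) hg,
    FilterSpace.almostDiscrete hg, FilterSpace.extremallyDisconnected ((U f).map e)⟩

/-- An edge of the trees in `TreeSpace`, given by its level, its label and a further number which
distinguishes the edges of the same level and label. -/
structure TreeEdge (O : Type*) where
  level : ℕ
  label : O
  copy : ℕ

theorem mk_treeEdge (O : Type) [Infinite O] : #(TreeEdge O) = #O := by
  let e : TreeEdge O ≃ ℕ × O × ℕ :=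
    { toFun := fun x => (x.level, x.label, x.copy)
      invFun := fun x => ⟨x.1, x.2.1, x.2.2⟩ }
  rw [e.cardinal_eq, mk_prod, mk_prod]
  simp

/-- The tree of finite paths whose labels decrease along the path, written with the last edge
first. Every node has, at each level and for each label in `S`, infinitely many children, but only
one child for each label outside `S`. -/
def TreeSpace {O : Type*} [LT O] (S : Set O) : Type _ :=
  {l : List (TreeEdge O) // l.Pairwise (·.label < ·.label) ∧ ∀ e ∈ l, e.copy = 0 ∨ e.label ∈ S}

namespace TreeSpace

section Topology

variable {O : Type*} [LT O] {S : Set O}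

/-- The ancestor of `s` obtained by removing the final edges of level at least `k`. These maps
define the topology: a basic neighbourhood of `s` consists of the nodes reached from `s` by edges
of high level. -/
def trunc (k : ℕ) (s : TreeSpace S) : List (TreeEdge O) := s.1.dropWhile (k ≤ ·.level)

instance : TopologicalSpace (TreeSpace S) := ⨅ k, .induced (trunc k) ⊥

theorem trunc_eq_of_le {i k : ℕ} (hik : i ≤ k) {s t : TreeSpace S} (h : trunc k t = trunc k s) :
    trunc i t = trunc i s := by
  have hdrop (l : List (TreeEdge O)) :
      (l.dropWhile (k ≤ ·.level)).dropWhile (i ≤ ·.level) = l.dropWhile (i ≤ ·.level) := by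
    induction l with
    | nil => rfl
    | cons e l ih => by_cases hk : k ≤ e.level <;> simp [hk, hik.trans, ih]
  rw [trunc, trunc, ← hdrop t.1, ← hdrop s.1]
  exact congrArg _ h

theorem nhds_hasAntitoneBasis (s : TreeSpace S) :
    (𝓝 s).HasAntitoneBasis fun k => {t | trunc k t = trunc k s} := by
  have hanti : Antitone fun k => {t : TreeSpace S | trunc k t = trunc k s} :=
    fun i k hik t ht => trunc_eq_of_le hik ht
  refine ⟨?_, hanti⟩
  have hnhds : 𝓝 s = ⨅ k, 𝓟 {t | trunc k t = trunc k s} := by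
    rw [nhds_iInf]
    refine iInf_congr fun k => ?_
    let : TopologicalSpace (List (TreeEdge O)) := ⊥
    have : DiscreteTopology (List (TreeEdge O)) := ⟨rfl⟩
    rw [nhds_induced, nhds_discrete, comap_pure]
    rfl
  rw [hnhds]
  exact hasBasis_iInf_principal hanti.directed_ge

theorem eventually_trunc_eq (s : TreeSpace S) : ∀ᶠ k in atTop, trunc k s = s.1 := by
  obtain ⟨_ | ⟨e, l⟩, hs⟩ := s
  · exact .of_forall fun k => rfl
  · filter_upwards [eventually_gt_atTop e.level] with k hk
    exact List.dropWhile_cons_of_neg (by simpa using hk)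

theorem exists_append_of_trunc_eq {k : ℕ} {s t : TreeSpace S} (h : trunc k t = s.1) :
    ∃ u : List (TreeEdge O), t.1 = u ++ s.1 :=
  ⟨t.1.takeWhile (k ≤ ·.level), by rw [← h]; exact List.takeWhile_append_dropWhile.symm⟩

end Topology

section Rank

variable {O : Type*} [LinearOrder O] {S : Set O}

/-- The label of the last edge of `s`, and `⊤` at the root. -/
def rank (s : TreeSpace S) : WithTop O := (s.1.map (·.label)).head?

theorem coe_lt_rank_iff {b : O} {s : TreeSpace S} : ↑b < rank s ↔ ∀ e ∈ s.1, b < e.label := by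
  obtain ⟨_ | ⟨e, l⟩, hs⟩ := s
  · exact iff_of_true (WithTop.coe_lt_top b) (List.forall_mem_nil _)
  · exact WithTop.coe_lt_coe.trans ⟨fun hb => List.forall_mem_cons.2
      ⟨hb, fun _ he' => hb.trans (List.rel_of_pairwise_cons hs.1 he')⟩,
      fun h => h e List.mem_cons_self⟩

theorem rank_cons {e : TreeEdge O} {l : List (TreeEdge O)} (h) :
    rank (⟨e :: l, h⟩ : TreeSpace S) = e.label := rfl

/-- The child of `s` along an edge of level `k` with label `b`. -/
def child (s : TreeSpace S) {b : O} (hb : ↑b < rank s) (k c : ℕ) (hc : c = 0 ∨ b ∈ S) :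
    TreeSpace S :=
  ⟨⟨k, b, c⟩ :: s.1, List.pairwise_cons.2 ⟨coe_lt_rank_iff.1 hb, s.2.1⟩,
    List.forall_mem_cons.2 ⟨hc, s.2.2⟩⟩

theorem trunc_child {s : TreeSpace S} {b : O} (hb : ↑b < rank s) {k j : ℕ} {c : ℕ}
    (hc : c = 0 ∨ b ∈ S) (hjk : j ≤ k) : trunc j (child s hb k c hc) = trunc j s :=
  List.dropWhile_cons_of_pos (by simpa using hjk)

theorem eventually_rank_lt (s : TreeSpace S) : ∀ᶠ t in 𝓝[≠] s, rank t < rank s := by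
  obtain ⟨k, hk⟩ := s.eventually_trunc_eq.exists
  filter_upwards [nhdsWithin_le_nhds (s.nhds_hasAntitoneBasis.mem k), self_mem_nhdsWithin]
    with t ht hts
  obtain ⟨_ | ⟨e, u⟩, htu⟩ := exists_append_of_trunc_eq (Eq.trans ht hk)
  · exact absurd (Subtype.ext htu) hts
  · obtain ⟨l, hl⟩ := t
    obtain rfl : l = e :: (u ++ s.1) := htu
    rw [rank_cons, coe_lt_rank_iff]
    exact fun e' he' => List.rel_of_pairwise_cons hl.1 (List.mem_append_right u he')

theorem isCantorBendixsonRank_rank : IsCantorBendixsonRank (rank : TreeSpace S → WithTop O) := by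
  refine fun s c => ⟨fun hc => s.eventually_rank_lt.mono fun t ht => ht.trans_le hc, fun h => ?_⟩
  by_contra! hc
  obtain ⟨b, rfl⟩ := WithTop.ne_top_iff_exists.1 hc.ne_top
  obtain ⟨k, -, hk⟩ := s.nhds_hasAntitoneBasis.1.mem_iff.1 (eventually_nhdsWithin_iff.1 h)
  exact (hk (trunc_child hc (.inl rfl) le_rfl) (ne_of_apply_ne rank hc.ne)).false

theorem locallyConverges_rank_eq {s : TreeSpace S} {b b' : O} (hb : b ∉ S) (hbb' : b ⋖ b')
    (hs : rank s = b') : LocallyConverges {t : TreeSpace S | rank t = b} s := by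
  obtain ⟨k, hk⟩ := s.eventually_trunc_eq.exists
  refine ⟨_, s.nhds_hasAntitoneBasis.mem k, fun V hV => ?_⟩
  obtain ⟨j, -, hj⟩ := s.nhds_hasAntitoneBasis.1.mem_iff.1 hV
  have hbs : ↑b < rank s := hs ▸ WithTop.coe_lt_coe.2 hbb'.lt
  refine ((finite_lt_nat j).image fun n => child s hbs n 0 (.inl rfl)).subset ?_
  rintro t ⟨⟨htb, htk⟩, htV⟩
  obtain ⟨u, htu⟩ := exists_append_of_trunc_eq (Eq.trans htk hk)
  have hlt {e : TreeEdge O} (he : e ∈ u) : e.label < b' := by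
    rw [← WithTop.coe_lt_coe, ← hs, coe_lt_rank_iff]
    exact (List.pairwise_append.1 (htu ▸ t.2.1)).2.2 e he
  obtain ⟨l, hl, hlS⟩ := t
  obtain rfl : l = u ++ s.1 := htu
  rcases u with _ | ⟨⟨n, a, c⟩, _ | ⟨e, u⟩⟩
  · exact absurd (htb.symm.trans hs) (WithTop.coe_lt_coe.2 hbb'.lt).ne
  · obtain rfl : a = b := WithTop.coe_injective htb
    obtain rfl : c = 0 := (hlS _ List.mem_cons_self).resolve_right hb
    have hnj : n < j := not_le.1 fun hjn => htV (hj (trunc_child hbs (.inl rfl) hjn))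
    exact ⟨n, hnj, rfl⟩
  · obtain rfl : a = b := WithTop.coe_injective htb
    have hae : a < e.label := List.rel_of_pairwise_cons hl List.mem_cons_self
    exact absurd (hlt (by simp)) (hbb'.2 hae)

theorem not_locallyConverges_rank_eq {s : TreeSpace S} {b : O} (hb : b ∈ S) (hbs : ↑b < rank s) :
    ¬ LocallyConverges {t : TreeSpace S | rank t = b} s := by
  rintro ⟨U, hU, hfin⟩
  obtain ⟨k, -, hk⟩ := s.nhds_hasAntitoneBasis.1.mem_iff.1 hU
  obtain ⟨n, hn, hkn⟩ := (((tendsto_add_atTop_nat 1).eventually s.eventually_trunc_eq).and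
    (eventually_ge_atTop k)).exists
  let t (c : ℕ) : TreeSpace S := child s hbs n c (.inr hb)
  have ht : t.Injective := fun c d hcd => by
    simpa [t, child] using congrArg Subtype.val hcd
  refine infinite_range_of_injective ht
    ((hfin _ (s.nhds_hasAntitoneBasis.mem (n + 1))).subset ?_)
  rintro _ ⟨c, rfl⟩
  refine ⟨⟨rfl, hk (trunc_child hbs _ hkn)⟩, fun htc => ?_⟩
  have htrunc : trunc (n + 1) (t c) = (t c).1 := List.dropWhile_cons_of_neg (by simp)
  exact List.cons_ne_self _ _ (htrunc.symm.trans (Eq.trans htc hn))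

-- A homeomorphism preserves the rank, and near points of rank `b'` the set of points of rank `b`
-- converges locally exactly when `b ∉ S`.
theorem mem_of_homeomorph_sum {S' : Set O} [WellFoundedLT O] {Y Y' : Type*} [TopologicalSpace Y]
    [TopologicalSpace Y'] {r : Y → WithTop O} {r' : Y' → WithTop O} (hr : IsCantorBendixsonRank r)
    (hr' : IsCantorBendixsonRank r') (h : TreeSpace S ⊕ Y ≃ₜ TreeSpace S' ⊕ Y') {b b' : O}
    (hbb' : b ⋖ b') (hb'r' : ∀ y, r' y ≠ b') (hb : b ∈ S) : b ∈ S' := by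
  by_contra hbS'
  let root : TreeSpace S := ⟨[], .nil, List.forall_mem_nil _⟩
  let s : TreeSpace S := child root (b := b') (WithTop.coe_lt_top b') 0 0 (.inl rfl)
  have hrank := (isCantorBendixsonRank_rank.sumElim hr).apply_homeomorph
    (isCantorBendixsonRank_rank.sumElim hr') h
  have hr_s : Sum.elim rank r' (h (.inl s)) = b' := hrank (.inl s)
  obtain ⟨s', hs'⟩ | ⟨y, hy⟩ : (∃ s', Sum.inl s' = h (.inl s)) ∨ ∃ y, Sum.inr y = h (.inl s) := by
    rcases h (.inl s) with s' | y <;> simp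
  · have hrs' : rank s' = b' := by rw [← hs'] at hr_s; exact hr_s
    have hconv : LocallyConverges {z | Sum.elim rank r' z = b} (h (.inl s)) := by
      rw [← hs', ← locallyConverges_preimage_iff .inl]
      exact locallyConverges_rank_eq hbS' hbb' hrs'
    rw [← locallyConverges_preimage_iff h.isOpenEmbedding] at hconv
    have hpre : h ⁻¹' {z | Sum.elim rank r' z = b} = {z | Sum.elim rank r z = b} := by
      ext z
      simp only [mem_preimage, mem_ofPred_eq, hrank]
    rw [hpre, ← locallyConverges_preimage_iff .inl] at hconv
    exact not_locallyConverges_rank_eq hb (s := s) (WithTop.coe_lt_coe.2 hbb'.lt) hconv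
  · exact hb'r' y (by rw [← hy] at hr_s; exact hr_s)

end Rank

theorem mk_le {O : Type} [LT O] [Infinite O] (S : Set O) : #(TreeSpace S) ≤ #O := by
  have : Infinite (TreeEdge O) := infinite_iff.2 (mk_treeEdge O ▸ aleph0_le_mk O)
  exact (mk_subtype_le _).trans_eq ((mk_list_eq_mk _).trans (mk_treeEdge O))

theorem isScatteredPerfectSpace_sum {O Y : Type} [LinearOrder O] [WellFoundedLT O] [Infinite O]
    (S : Set O) [TopologicalSpace Y] {r : Y → WithTop O} (hr : IsCantorBendixsonRank r)
    (hY : HereditarilyUltraparacompact Y) (hGδ : ∀ C : Set Y, IsClosed C → IsGδ C)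
    (hO : #Y = #O) (hOY : #O ≤ tweight Y) :
    IsScatteredPerfectSpace #O (tweight Y) (TreeSpace S ⊕ Y) := by
  refine .of_hereditarilyUltraparacompact (isCantorBendixsonRank_rank.sumElim hr).scattered
    ((hereditarilyUltraparacompact_of_hasAntitoneBasis_fibers nhds_hasAntitoneBasis).sum hY)
    (isGδ_of_isClosed_sum
      (isGδ_of_isClosed_of_hasAntitoneBasis_fibers nhds_hasAntitoneBasis) hGδ) ?_ ?_
  · rw [mk_sum, lift_id, lift_id, hO]
    exact add_eq_right (aleph0_le_mk O) (mk_le S)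
  · have htree : tweight (TreeSpace S) ≤ tweight Y := calc
      tweight (TreeSpace S) ≤ ℵ₀ * #(TreeSpace S) :=
        tweight_le_of_hasAntitoneBasis_fibers nhds_hasAntitoneBasis
      _ ≤ ℵ₀ * #O := mul_le_mul_right (mk_le S) _
      _ = #O := aleph0_mul_mk_eq
      _ ≤ tweight Y := hOY
    refine le_antisymm ?_ (tweight_le_of_isInducing IsEmbedding.inr.isInducing)
    exact (tweight_sum_le _ _).trans_eq
      (add_eq_right ((aleph0_le_mk O).trans hOY) htree)

theorem existsNonHomeoFamily_sum {O Y : Type} [LinearOrder O] [WellFoundedLT O] [SuccOrder O]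
    [NoMaxOrder O] [TopologicalSpace Y] {r : Y → WithTop O} (hr : IsCantorBendixsonRank r)
    (hr_ne : ∀ y (a : O), r y ≠ (Order.succ (Order.succ a) : O))
    {P : (X : Type) → TopologicalSpace X → Prop}
    (hP : ∀ S : Set O, P (TreeSpace S ⊕ Y) inferInstance) : ExistsNonHomeoFamily (2 ^ #O) P := by
  refine ⟨Set O, fun S => TreeSpace (Order.succ '' S) ⊕ Y, fun S => inferInstance, mk_set,
    fun S => hP _, fun S T hST => ⟨fun h => hST ?_⟩⟩
  have hsub {S T : Set O}
      (h : TreeSpace (Order.succ '' S) ⊕ Y ≃ₜ TreeSpace (Order.succ '' T) ⊕ Y) : S ⊆ T := by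
    intro a ha
    have := mem_of_homeomorph_sum hr hr h (Order.covBy_succ (Order.succ a))
      (fun y => hr_ne y a) (mem_image_of_mem _ ha)
    exact Order.succ_injective.mem_set_image.1 this
  exact (hsub h).antisymm (hsub h.symm)

end TreeSpace

theorem existsNonHomeoFamily_isScatteredPerfectSpace {J K : Type} [Infinite K] (hKJ : #K ≤ #J)
    (hJK : #J ≤ 2 ^ #K) :
    ExistsNonHomeoFamily (2 ^ #K) fun X t =>
      letI := t
      IsScatteredPerfectSpace #K #J X := by
  have : Infinite J := infinite_iff.2 ((aleph0_le_mk K).trans hKJ)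
  obtain ⟨F, -, hF⟩ := exists_injective_filter_filterCharacter_eq hJK
  obtain ⟨hne, htends, hchar⟩ := hF ∅
  have hKN : #(ℕ × K) = #K := by simp
  have hweight : tweight (FilterSpace (F ∅)) = #J := hchar ▸
    FilterSpace.tweight_eq (hKN.trans_le (hKJ.trans_eq hchar.symm))
  let O := (#K).ord.ToType
  have hO : #O = #K := mk_ord_toType _
  have : NoMaxOrder O := Cardinal.noMaxOrder (aleph0_le_mk K)
  have : Infinite O := infinite_iff.2 (hO ▸ aleph0_le_mk K)
  let : OrderBot O := WellFoundedLT.toOrderBot O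
  let c : WithTop O := (Order.succ ⊥ : O)
  have hc : ⊥ ⋖ c := by
    rw [← WithTop.coe_bot]
    exact WithTop.coe_covBy_coe.2 (Order.covBy_succ (⊥ : O))
  have hrank := FilterSpace.isCantorBendixsonRank_rank (F := F ∅) hc
  have hrank_ne (y : FilterSpace (F ∅)) (a : O) :
      FilterSpace.rank c y ≠ (Order.succ (Order.succ a) : O) := by
    rcases y with _ | k
    · rw [FilterSpace.rank]
      exact WithTop.coe_injective.ne (Order.succ_injective.ne (Order.bot_lt_succ a).ne)
    · rw [FilterSpace.rank, ← WithTop.coe_bot]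
      exact WithTop.coe_injective.ne (Order.bot_lt_succ _).ne
  rw [← hO]
  refine TreeSpace.existsNonHomeoFamily_sum hrank hrank_ne fun S => ?_
  rw [← hweight]
  refine TreeSpace.isScatteredPerfectSpace_sum S hrank
    (hereditarilyUltraparacompact_of_isOpen_singleton FilterSpace.isOpen_singleton)
    (fun C _ => isGδ_of_isOpen_singleton FilterSpace.isOpen_singleton
      (FilterSpace.isGδ_singleton_infty htends) C) ?_ ?_
  · rw [FilterSpace.mk_eq, hKN, hO]
  · rw [hweight, hO]
    exact hKJ

theorem exists_infinite_mk_le_and_le_two_power {J K : Type} [Infinite K] {μ : Cardinal}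
    (hμ : ℵ₀ ≤ μ) (hJμ : #J ≤ 2 ^ μ) (hJK : #J ≤ 2 ^ #K) :
    ∃ N : Type, Infinite N ∧ #N ≤ μ ∧ #N ≤ #K ∧ #J ≤ 2 ^ #N := by
  have hN : #(min μ #K).out = min μ #K := mk_out _
  refine ⟨_, infinite_iff.2 ((le_min hμ (aleph0_le_mk K)).trans_eq hN.symm),
    hN.trans_le (min_le_left _ _), hN.trans_le (min_le_right _ _), ?_⟩
  rcases min_choice μ #K with h | h <;> rwa [hN, h]

/-- Theorem 1: if `κ ≤ λ ≤ 2 ^ κ` (all infinite), then there exist `2 ^ λ` mutually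
non-homeomorphic scattered, strongly zero-dimensional, hereditarily paracompact,
perfectly normal spaces of cardinality `κ` and weight `λ`; if moreover
`λ ≤ 2 ^ μ < 2 ^ λ` for some infinite `μ`, the spaces can be taken almost discrete;
and if `λ = 2 ^ μ` for some infinite `μ`, they can be taken almost discrete and
extremally disconnected. -/
theorem stmt11 (κ lam : Cardinal) (hκ : ℵ₀ ≤ κ) (h1 : κ ≤ lam) (h2 : lam ≤ 2 ^ κ) :
    ExistsNonHomeoFamily (2 ^ lam) (fun X t =>
      letI := t
      Scattered X ∧ StronglyZeroDimensional X ∧ HereditarilyParacompact X ∧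
        PerfectlyNormal X ∧ #X = κ ∧ tweight X = lam)
    ∧ ((∃ μ : Cardinal, ℵ₀ ≤ μ ∧ lam ≤ 2 ^ μ ∧ (2 : Cardinal) ^ μ < 2 ^ lam) →
      ExistsNonHomeoFamily (2 ^ lam) (fun X t =>
        letI := t
        Scattered X ∧ StronglyZeroDimensional X ∧ HereditarilyParacompact X ∧
          PerfectlyNormal X ∧ #X = κ ∧ tweight X = lam ∧ AlmostDiscrete X))
    ∧ ((∃ μ : Cardinal, ℵ₀ ≤ μ ∧ lam = 2 ^ μ) →
      ExistsNonHomeoFamily (2 ^ lam) (fun X t =>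
        letI := t
        Scattered X ∧ StronglyZeroDimensional X ∧ HereditarilyParacompact X ∧
          PerfectlyNormal X ∧ #X = κ ∧ tweight X = lam ∧ AlmostDiscrete X ∧
          ExtremallyDisconnected X)) := by
  induction κ using Cardinal.inductionOn with | _ K
  induction lam using Cardinal.inductionOn with | _ J
  have : Infinite K := infinite_iff.2 hκ
  refine ⟨?_, ?_, ?_⟩
  · rcases (power_le_power_left two_ne_zero h1).lt_or_eq with hlt | heq
    · exact (existsNonHomeoFamily_almostDiscrete le_rfl h1 h2 hlt).mono fun _ _ hX => hX.1
    · exact heq ▸ existsNonHomeoFamily_isScatteredPerfectSpace h1 h2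
  · rintro ⟨μ, hμ, hJμ, hlt⟩
    obtain ⟨N, _, hNμ, hNK, hJN⟩ := exists_infinite_mk_le_and_le_two_power hμ hJμ h2
    have hNJ := (power_le_power_left two_ne_zero hNμ).trans_lt hlt
    exact (existsNonHomeoFamily_almostDiscrete hNK h1 hJN hNJ).mono
      fun _ _ ⟨⟨hs, hz, hp, hn, hc, hw⟩, ha⟩ => ⟨hs, hz, hp, hn, hc, hw, ha⟩
  · rintro ⟨μ, hμ, hJμ⟩
    obtain ⟨N, _, hNμ, hNK, hJN⟩ := exists_infinite_mk_le_and_le_two_power hμ hJμ.le h2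
    have hJ : #J = 2 ^ #N := hJN.antisymm (hJμ ▸ power_le_power_left two_ne_zero hNμ)
    rw [hJ] at h1 ⊢
    exact (existsNonHomeoFamily_extremallyDisconnected hNK h1).mono
      fun _ _ ⟨⟨hs, hz, hp, hn, hc, hw⟩, ha, hd⟩ => ⟨hs, hz, hp, hn, hc, hw, ha, hd⟩
end
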